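/- Sobolev inequality in the weighted variable exponent setting (Proposition 2.6, stated for C¹ functions): let N ≥ 2, let p : ℝ^N → ℝ be continuous with 1 < p⁻ ≤ p(x) ≤ p⁺ < N for all x, satisfying the log-Hölder continuity condition (there is C₁ > 0 with |p(x) − p(y)| · log(1/|x−y|) ≤ C₁ whenever 0 < |x−y| < 1/2) and the log-Hölder decay condition (there are p_∞ ∈ ℝ and C₂ > 0 with |p(x) − p_∞| ≤ C₂/log(e + |x|) for all x). Let b : ℝ^N → ℝ be measurable and essentially bounded with ess inf_{x∈ℝ^N} b(x) > 0. Set p*(x) := N p(x)/(N − p(x)). Then there exists a constant C* > 0 such that for every continuously differentiable function u : ℝ^N → ℝ with ∫_{ℝ^N} (|∇u(x)|^{p(x)} + b(x)|u(x)|^{p(x)}) dx < ∞ one has ‖u‖_{p*(·)} ≤ C* ‖u‖_{b,p}, where ‖u‖_{b,p} := inf{τ > 0 : ∫_{ℝ^N} (|∇u(x)/τ|^{p(x)} + b(x)|u(x)/τ|^{p(x)}) dx ≤ 1}. -/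

import Mathlib

open MeasureTheory

/-- The Luxemburg norm `‖u‖_{p(·)} = inf {τ > 0 : ∫ |u(x)/τ|^{p(x)} dx ≤ 1}`. -/
noncomputable def luxNorm {N : ℕ} (p u : EuclideanSpace ℝ (Fin N) → ℝ) : ℝ :=
  sInf {τ : ℝ | 0 < τ ∧ ∫ x, |u x / τ| ^ (p x) ≤ 1}

/-- The weighted Sobolev norm
`‖u‖_{b,p} = inf {τ > 0 : ∫ (|∇u(x)/τ|^{p(x)} + b(x)|u(x)/τ|^{p(x)}) dx ≤ 1}`. -/
noncomputable def weightedSobolevNorm {N : ℕ}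
    (p b u : EuclideanSpace ℝ (Fin N) → ℝ) : ℝ :=
  sInf {τ : ℝ | 0 < τ ∧
    ∫ x, ((‖gradient u x‖ / τ) ^ (p x) + b x * (|u x| / τ) ^ (p x)) ≤ 1}

/-!
On a ball of radius `t ^ (-s) / 16` log-Hölder continuity makes `t ^ p x` constant up to a bounded
factor, so the exponent can be frozen there at its minimum. Applying the classical
Gagliardo–Nirenberg–Sobolev inequality, whose constant is uniform for exponents in `[1, P]` with
`P < N`, to `u` cut off to such a ball and between the levels `t` and `2 * t` bounds
`∫ t ^ (p* x)` over the part of the ball where `2 * t ≤ |u|` by an energy at level `t`. The price of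
the small ball is a factor `t ^ (s * p* x)`. Averaging over the centres of the balls makes the
estimate global.

Summing over `t = 2 ^ k` bounds the modular of `u` with exponent `p*` by a constant plus a
multiple of the modular with exponent `p + s * p*`. For `s = 1 / (2 * N)` this exponent is at most
`p* - s`, because `p* - p = p * p* / N`, so the last modular is at most a small multiple of the
first plus a constant, and can be absorbed. The truncations `min |u| (2 ^ m)` provide the
finiteness that the absorption needs.
-/

open Filter Function Metric Module Set
open scoped ENNReal NNReal Topology

/-- The Sobolev conjugate `q* = n q / (n - q)` of an exponent `q` in dimension `n`. It is only
meaningful for `q < n`; at `q = n` division by zero makes it `0`. -/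
noncomputable def sobolevConj (n q : ℝ) : ℝ :=
  n * q / (n - q)

section SobolevConj

variable {n p q P : ℝ}

lemma sobolevConj_eq_mul (n q : ℝ) : sobolevConj n q = q * (n / (n - q)) := by
  rw [sobolevConj]
  ring

lemma le_sobolevConj (hq : 0 ≤ q) (hqn : q < n) : q ≤ sobolevConj n q := by
  rw [sobolevConj, le_div_iff₀ (sub_pos.2 hqn)]
  nlinarith

lemma sobolevConj_sub_sobolevConj (hp : p < n) (hq : q < n) :
    sobolevConj n p - sobolevConj n q = n ^ 2 / ((n - p) * (n - q)) * (p - q) := by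
  have hp' : n - p ≠ 0 := (sub_pos.2 hp).ne'
  have hq' : n - q ≠ 0 := (sub_pos.2 hq).ne'
  rw [sobolevConj, sobolevConj]
  field_simp
  ring

lemma sobolevConj_le_sobolevConj (hqp : q ≤ p) (hp : p < n) :
    sobolevConj n q ≤ sobolevConj n p := by
  have hp' : 0 < n - p := sub_pos.2 hp
  have hq' : 0 < n - q := sub_pos.2 (hqp.trans_lt hp)
  rw [← sub_nonneg, sobolevConj_sub_sobolevConj hp (hqp.trans_lt hp)]
  exact mul_nonneg (div_nonneg (sq_nonneg n) (mul_pos hp' hq').le) (sub_nonneg.2 hqp)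

lemma sobolevConj_sub_le (hP : P < n) (hp : p ≤ P) (hq : q ≤ P) :
    sobolevConj n p - sobolevConj n q ≤ (n / (n - P)) ^ 2 * |p - q| := by
  have hP' : 0 < n - P := sub_pos.2 hP
  have hp' : n - P ≤ n - p := sub_le_sub_left hp n
  have hq' : n - P ≤ n - q := sub_le_sub_left hq n
  have hp₀ : 0 < n - p := hP'.trans_le hp'
  have hq₀ : 0 < n - q := hP'.trans_le hq'
  calc sobolevConj n p - sobolevConj n q = n ^ 2 / ((n - p) * (n - q)) * (p - q) :=
        sobolevConj_sub_sobolevConj (hp.trans_lt hP) (hq.trans_lt hP)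
    _ ≤ n ^ 2 / ((n - p) * (n - q)) * |p - q| :=
        mul_le_mul_of_nonneg_left (le_abs_self _) (by positivity)
    _ ≤ n ^ 2 / ((n - P) * (n - P)) * |p - q| := by gcongr
    _ = (n / (n - P)) ^ 2 * |p - q| := by rw [div_pow, sq (n - P)]

-- The gain `p* - p = p * p* / n` leaves room for a loss of `s * p*` on each level set.
lemma add_mul_sobolevConj_add_le (hp : 1 ≤ p) (hpn : p < n) :
    p + 1 / (2 * n) * sobolevConj n p + 1 / (2 * n) ≤ sobolevConj n p := by
  have hn : 0 < n := by linarith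
  have hgain : sobolevConj n p - p = p * (2 * (1 / (2 * n) * sobolevConj n p)) := by
    have hnp : n - p ≠ 0 := (sub_pos.2 hpn).ne'
    rw [sobolevConj]
    field_simp
    ring
  have hone : 1 ≤ sobolevConj n p := hp.trans (le_sobolevConj (by linarith) hpn)
  have hs : 1 / (2 * n) ≤ 1 / (2 * n) * sobolevConj n p :=
    le_mul_of_one_le_right (by positivity) hone
  nlinarith [one_div_pos.2 (mul_pos two_pos hn)]

end SobolevConj

/-- `p` is log-Hölder continuous with constant `C`: `|p x - p y| ≤ C / log (1 / dist x y)` for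
`0 < dist x y < 1 / 2`. -/
def LogHolderWith {X : Type*} [PseudoMetricSpace X] (C : ℝ≥0) (p : X → ℝ) : Prop :=
  ∀ x y, 0 < dist x y → dist x y < 1 / 2 → |p x - p y| * Real.log (1 / dist x y) ≤ C

namespace LogHolderWith

variable {X : Type*} [MetricSpace X] {C : ℝ≥0} {p : X → ℝ}

lemma continuous (hp : LogHolderWith C p) : Continuous p := by
  refine continuous_iff_continuousAt.2 fun x => continuousAt_iff_punctured_nhds.2 ?_
  have hdist : Tendsto (fun y => dist y x) (𝓝[≠] x) (𝓝[>] 0) :=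
    tendsto_nhdsWithin_iff.2
      ⟨tendsto_nhdsWithin_of_tendsto_nhds (tendsto_iff_dist_tendsto_zero.1 tendsto_id),
        eventually_mem_nhdsWithin.mono fun y hy => dist_pos.2 hy⟩
  have hlog : Tendsto (fun y => Real.log (1 / dist y x)) (𝓝[≠] x) atTop := by
    simp only [one_div]
    exact Real.tendsto_log_atTop.comp (tendsto_inv_nhdsGT_zero.comp hdist)
  rw [tendsto_iff_dist_tendsto_zero]
  refine squeeze_zero' (.of_forall fun _ => dist_nonneg) ?_ (hlog.const_div_atTop (C : ℝ))
  have hhalf : ∀ᶠ y in 𝓝[≠] x, dist y x < 1 / 2 :=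
    (hdist.mono_right nhdsWithin_le_nhds).eventually_lt_const (by norm_num)
  filter_upwards [hlog.eventually_gt_atTop 0, hhalf, eventually_mem_nhdsWithin] with y hy hyx hne
  exact (le_div_iff₀ hy).2 (hp y x (dist_pos.2 hne) hyx)

lemma abs_sub_mul_log_le (hp : LogHolderWith C p) {s t : ℝ} (hs : 0 < s) (ht : 1 ≤ t) {x y : X}
    (hxy : dist x y ≤ t ^ (-s) / 4) : |p x - p y| * Real.log t ≤ C / s := by
  rcases eq_or_ne x y with rfl | hne
  · simp only [sub_self, abs_zero, zero_mul]
    positivity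
  have ht₀ : 0 < t := by linarith
  have hdist : 0 < dist x y := dist_pos.2 hne
  have hlog : s * Real.log t ≤ Real.log (1 / dist x y) := by
    rw [← Real.log_rpow ht₀]
    refine Real.log_le_log (by positivity) ((le_div_iff₀ hdist).2 ?_)
    calc t ^ s * dist x y ≤ t ^ s * (t ^ (-s) / 4) := by gcongr
      _ = 1 / 4 := by rw [← mul_div_assoc, ← Real.rpow_add ht₀, add_neg_cancel, Real.rpow_zero]
      _ ≤ 1 := by norm_num
  have hhalf : dist x y < 1 / 2 := by
    linarith [Real.rpow_le_one_of_one_le_of_nonpos ht (neg_nonpos.2 hs.le)]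
  rw [le_div_iff₀ hs]
  calc |p x - p y| * Real.log t * s = |p x - p y| * (s * Real.log t) := by ring
    _ ≤ |p x - p y| * Real.log (1 / dist x y) := by gcongr
    _ ≤ C := hp x y hdist hhalf

lemma rpow_sobolevConj_le (hp : LogHolderWith C p) {n P : ℝ} (hP : P < n) (hpP : ∀ x, p x ≤ P)
    {s t : ℝ} (hs : 0 < s) (ht : 1 ≤ t) {x y : X} (hxy : dist x y ≤ t ^ (-s) / 4) :
    t ^ sobolevConj n (p x) ≤
      Real.exp ((n / (n - P)) ^ 2 * (C / s)) * t ^ sobolevConj n (p y) := by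
  have ht₀ : 0 < t := by linarith
  have hlog : (sobolevConj n (p x) - sobolevConj n (p y)) * Real.log t ≤
      (n / (n - P)) ^ 2 * (C / s) :=
    calc (sobolevConj n (p x) - sobolevConj n (p y)) * Real.log t
        ≤ (n / (n - P)) ^ 2 * |p x - p y| * Real.log t :=
          mul_le_mul_of_nonneg_right (sobolevConj_sub_le hP (hpP x) (hpP y)) (Real.log_nonneg ht)
      _ = (n / (n - P)) ^ 2 * (|p x - p y| * Real.log t) := mul_assoc _ _ _
      _ ≤ (n / (n - P)) ^ 2 * (C / s) := by
          gcongr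
          exact hp.abs_sub_mul_log_le hs ht hxy
  rw [Real.rpow_def_of_pos ht₀, Real.rpow_def_of_pos ht₀, ← Real.exp_add, Real.exp_le_exp]
  linarith

end LogHolderWith

variable {E : Type*} [NormedAddCommGroup E] [NormedSpace ℝ E]

section Sobolev

variable [FiniteDimensional ℝ E] [MeasurableSpace E] [BorelSpace E]
  {F : Type*} [NormedAddCommGroup F] [InnerProductSpace ℝ F]

lemma exists_eLpNorm_sobolevConj_le (μ : Measure E) [μ.IsAddHaarMeasure] {P : ℝ}
    (hP : P < finrank ℝ E) :
    ∃ D : ℝ≥0, 1 ≤ D ∧ ∀ q : ℝ, 1 ≤ q → q ≤ P → ∀ w : E → F, ContDiff ℝ 1 w →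
      HasCompactSupport w → eLpNorm w (sobolevConj (finrank ℝ E) q).toNNReal μ ≤
        D * eLpNorm (fderiv ℝ w) q.toNNReal μ := by
  set n := finrank ℝ E
  refine ⟨max 1 (eLpNormLESNormFDerivOneConst μ (NNReal.conjExponent n) *
    (P * (n - 1) / (n - P)).toNNReal), le_max_left _ _, fun q hq hqP w hw hw_supp => ?_⟩
  have hqn : 0 < (n : ℝ) - q := by linarith
  have hn₁ : (1 : ℝ) < n := by linarith
  have hconj₀ : 0 ≤ sobolevConj n q :=
    (zero_le_one.trans hq).trans (le_sobolevConj (by linarith) (by linarith))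
  have hconj : (((sobolevConj n q).toNNReal : ℝ≥0) : ℝ)⁻¹ = (q.toNNReal : ℝ)⁻¹ - (n : ℝ)⁻¹ := by
    rw [Real.coe_toNNReal q (by linarith), Real.coe_toNNReal _ hconj₀, sobolevConj]
    field_simp
  refine (eLpNorm_le_eLpNorm_fderiv_of_eq_inner μ hw hw_supp (Real.one_le_toNNReal.2 hq)
    (by exact_mod_cast zero_lt_one.trans hn₁) hconj).trans ?_
  gcongr
  rw [eLpNormLESNormFDerivOfEqInnerConst, Real.coe_toNNReal q (by linarith)]
  refine le_trans ?_ (le_max_right _ _)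
  gcongr
  exact mul_nonneg (by linarith) (by linarith)

/-- The constant is uniform in `q ∈ [1, P]`, which is what allows the exponent to be frozen at
different values on different balls. -/
lemma exists_lintegral_rpow_sobolevConj_le (μ : Measure E) [μ.IsAddHaarMeasure] {P : ℝ}
    (hP : P < finrank ℝ E) :
    ∃ S : ℝ≥0, ∀ q : ℝ, 1 ≤ q → q ≤ P → ∀ w : E → F, ContDiff ℝ 1 w → HasCompactSupport w →
      ∫⁻ x, ‖w x‖ₑ ^ sobolevConj (finrank ℝ E) q ∂μ ≤
        S * (∫⁻ x, ‖fderiv ℝ w x‖ₑ ^ q ∂μ) ^ ((finrank ℝ E : ℝ) / (finrank ℝ E - q)) := by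
  set n : ℝ := (finrank ℝ E : ℝ)
  obtain ⟨D, hD, hsob⟩ := exists_eLpNorm_sobolevConj_le (F := F) μ hP
  refine ⟨D ^ sobolevConj n P, fun q hq hqP w hw hw_supp => ?_⟩
  have hq₀ : 0 < q := by linarith
  have hconj : 0 < sobolevConj n q := hq₀.trans_le (le_sobolevConj hq₀.le (by linarith))
  have hnorm := hsob q hq hqP w hw hw_supp
  rw [eLpNorm_nnreal_eq_lintegral (by simpa using hconj),
    eLpNorm_nnreal_eq_lintegral (by simpa using hq₀), Real.coe_toNNReal _ hq₀.le,
    Real.coe_toNNReal _ hconj.le, one_div, ENNReal.rpow_inv_le_iff hconj,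
    ENNReal.mul_rpow_of_nonneg _ _ hconj.le, ← ENNReal.rpow_mul,
    ← ENNReal.coe_rpow_of_nonneg _ hconj.le] at hnorm
  have hexp : 1 / q * sobolevConj n q = n / (n - q) := by
    rw [sobolevConj_eq_mul, one_div, inv_mul_cancel_left₀ hq₀.ne']
  rw [hexp] at hnorm
  refine hnorm.trans ?_
  gcongr
  exact sobolevConj_le_sobolevConj hqP hP

end Sobolev

section Cutoff

lemma exists_norm_fderiv_contDiffBump_le (E : Type*) [NormedAddCommGroup E] [NormedSpace ℝ E]
    [FiniteDimensional ℝ E] :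
    ∃ c : ℝ≥0, ∀ (y : E) (f : ContDiffBump y), f.rOut = 2 * f.rIn →
      ∀ x, ‖fderiv ℝ f x‖ ≤ c / f.rIn := by
  let g : ContDiffBump (0 : E) := ⟨1, 2, by norm_num, by norm_num⟩
  have hg : ContDiff ℝ 1 g := g.contDiff
  obtain ⟨c, hc⟩ := (hg.continuous_fderiv one_ne_zero).bounded_above_of_compact_support
    (g.hasCompactSupport.fderiv (𝕜 := ℝ))
  refine ⟨c.toNNReal, fun y f hf x => ?_⟩
  have hscale : ⇑f = fun x => g (f.rIn⁻¹ • (x - y)) := by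
    ext x
    simp [ContDiffBump.apply, g, hf, f.rIn_pos.ne']
  rw [hscale, fderiv_comp_sub (f := fun z => g (f.rIn⁻¹ • z)) y, fderiv_comp_smul, norm_smul,
    norm_inv, Real.norm_of_nonneg f.rIn_pos.le, div_eq_inv_mul]
  gcongr
  · exact inv_nonneg.2 f.rIn_pos.le
  · exact (hc _).trans (Real.le_coe_toNNReal c)

lemma exists_contDiff_levelCutoff :
    ∃ c : ℝ≥0, ∀ t : ℝ, 0 < t → ∃ ψ : ℝ → ℝ, ContDiff ℝ 1 ψ ∧ (∀ a, ψ a ∈ Icc 0 t) ∧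
      (∀ a, |a| ≤ t → ψ a = 0) ∧ (∀ a, 2 * t ≤ |a| → ψ a = t) ∧ ∀ a, ‖fderiv ℝ ψ a‖ ≤ c := by
  obtain ⟨c, hc⟩ := exists_norm_fderiv_contDiffBump_le ℝ
  refine ⟨c, fun t ht => ?_⟩
  let g : ContDiffBump (0 : ℝ) := ⟨t, 2 * t, ht, by linarith⟩
  have hg : Differentiable ℝ fun a => 1 - g a :=
    (contDiff_const.sub (g.contDiff (n := 1))).differentiable one_ne_zero
  refine ⟨fun a => t * (1 - g a), contDiff_const.mul (contDiff_const.sub g.contDiff),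
    fun a => ⟨?_, ?_⟩, fun a ha => ?_, fun a ha => ?_, fun a => ?_⟩
  · exact mul_nonneg ht.le (sub_nonneg.2 g.le_one)
  · exact mul_le_of_le_one_right ht.le (sub_le_self _ g.nonneg)
  · beta_reduce
    rw [g.one_of_mem_closedBall (by simpa [g] using ha), sub_self, mul_zero]
  · beta_reduce
    rw [g.zero_of_le_dist (by simpa [g] using ha), sub_zero, mul_one]
  · rw [fderiv_const_mul (hg a), fderiv_const_sub, norm_smul, norm_neg,
      Real.norm_of_nonneg ht.le, ← le_div_iff₀' ht]
    exact hc 0 g rfl a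

lemma norm_fderiv_comp_le_indicator {u : E → ℝ} (hu : ContDiff ℝ 1 u) {ψ : ℝ → ℝ}
    (hψ : ContDiff ℝ 1 ψ) {t : ℝ} {c : ℝ≥0} (hψ_top : ∀ a, 2 * t ≤ |a| → ψ a = t)
    (hc : ∀ a, ‖fderiv ℝ ψ a‖ ≤ c) (x : E) :
    ‖fderiv ℝ (ψ ∘ u) x‖ ≤ c * {x | ‖u x‖ ≤ 2 * t}.indicator (fun x => ‖fderiv ℝ u x‖) x := by
  by_cases hx : ‖u x‖ ≤ 2 * t
  · rw [indicator_of_mem (by exact hx), fderiv_comp x (hψ.differentiable one_ne_zero _)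
      (hu.differentiable one_ne_zero x)]
    exact (ContinuousLinearMap.opNorm_comp_le _ _).trans (by gcongr; exact hc _)
  · have hconst : ψ ∘ u =ᶠ[𝓝 x] fun _ => t := by
      filter_upwards [(isOpen_lt continuous_const hu.continuous.norm).mem_nhds
        (show 2 * t < ‖u x‖ from not_le.1 hx)] with z hz
      exact hψ_top _ (le_of_lt hz)
    rw [hconst.fderiv_eq, fderiv_const_apply, norm_zero]
    exact mul_nonneg c.2 (indicator_nonneg (fun _ _ => norm_nonneg _) x)

lemma norm_fderiv_mul_comp_le {f u : E → ℝ} {ψ : ℝ → ℝ} {t r : ℝ} (hr : 0 ≤ r) {c₁ c₂ : ℝ≥0}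
    (hf : Differentiable ℝ f) (hf_mem : ∀ x, f x ∈ Icc 0 1)
    (hf_deriv : ∀ x, ‖fderiv ℝ f x‖ ≤ c₁ / r) (hu : ContDiff ℝ 1 u) (hψ : ContDiff ℝ 1 ψ)
    (hψ_mem : ∀ a, ψ a ∈ Icc 0 t) (hψ_top : ∀ a, 2 * t ≤ |a| → ψ a = t)
    (hψ_deriv : ∀ a, ‖fderiv ℝ ψ a‖ ≤ c₂) (x : E) :
    ‖fderiv ℝ (fun x => f x * ψ (u x)) x‖ ≤ (c₁ + c₂ : ℝ≥0) *
      (t / r + {x | ‖u x‖ ≤ 2 * t}.indicator (fun x => ‖fderiv ℝ u x‖) x) := by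
  have ht : 0 ≤ t := (hψ_mem 0).1.trans (hψ_mem 0).2
  have hderiv : fderiv ℝ (fun x => f x * ψ (u x)) x =
      f x • fderiv ℝ (ψ ∘ u) x + ψ (u x) • fderiv ℝ f x :=
    fderiv_mul (hf x) ((hψ.comp hu).differentiable one_ne_zero x)
  have hspace : ‖ψ (u x) • fderiv ℝ f x‖ ≤ c₁ * (t / r) := by
    rw [norm_smul, Real.norm_of_nonneg (hψ_mem _).1]
    calc ψ (u x) * ‖fderiv ℝ f x‖ ≤ t * (c₁ / r) :=
          mul_le_mul (hψ_mem _).2 (hf_deriv x) (norm_nonneg _) ht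
      _ = c₁ * (t / r) := by ring
  have hvalue : ‖f x • fderiv ℝ (ψ ∘ u) x‖ ≤
      c₂ * {x | ‖u x‖ ≤ 2 * t}.indicator (fun x => ‖fderiv ℝ u x‖) x := by
    rw [norm_smul, Real.norm_of_nonneg (hf_mem x).1]
    exact (mul_le_of_le_one_left (norm_nonneg _) (hf_mem x).2).trans
      (norm_fderiv_comp_le_indicator hu hψ hψ_top hψ_deriv x)
  have hind : 0 ≤ {x | ‖u x‖ ≤ 2 * t}.indicator (fun x => ‖fderiv ℝ u x‖) x :=
    indicator_nonneg (fun _ _ => norm_nonneg _) x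
  rw [hderiv, NNReal.coe_add]
  nlinarith [norm_add_le (f x • fderiv ℝ (ψ ∘ u) x) (ψ (u x) • fderiv ℝ f x),
    mul_nonneg c₁.coe_nonneg hind, mul_nonneg c₂.coe_nonneg (div_nonneg ht hr)]

/-- The truncation `w` is the product of a bump function in space and a cutoff `ψ ∘ u` of the levels
of `u`. -/
lemma exists_contDiff_truncation (E : Type*) [NormedAddCommGroup E] [NormedSpace ℝ E]
    [FiniteDimensional ℝ E] :
    ∃ c : ℝ≥0, ∀ u : E → ℝ, ContDiff ℝ 1 u → ∀ t r : ℝ, 0 < t → 0 < r → ∀ y : E,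
      ∃ w : E → ℝ, ContDiff ℝ 1 w ∧ HasCompactSupport w ∧
        (∀ x ∈ closedBall y r, 2 * t ≤ ‖u x‖ → w x = t) ∧
        support (fderiv ℝ w) ⊆ closedBall y (2 * r) ∩ {x | t ≤ ‖u x‖} ∧
        ∀ x, ‖fderiv ℝ w x‖ ≤
          c * (t / r + {x | ‖u x‖ ≤ 2 * t}.indicator (fun x => ‖fderiv ℝ u x‖) x) := by
  obtain ⟨c₁, hc₁⟩ := exists_norm_fderiv_contDiffBump_le E
  obtain ⟨c₂, hc₂⟩ := exists_contDiff_levelCutoff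
  refine ⟨c₁ + c₂, fun u hu t r ht hr y => ?_⟩
  obtain ⟨ψ, hψ, hψ_mem, hψ_zero, hψ_top, hψ_deriv⟩ := hc₂ t ht
  let f : ContDiffBump y := ⟨r, 2 * r, hr, by linarith⟩
  have hf : ContDiff ℝ 1 f := f.contDiff
  have hw_supp : tsupport (fun x => f x * ψ (u x)) ⊆ closedBall y (2 * r) :=
    tsupport_mul_subset_left.trans f.tsupport_eq.subset
  refine ⟨fun x => f x * ψ (u x), hf.mul (hψ.comp hu),
    HasCompactSupport.of_support_subset_isCompact (isCompact_closedBall y (2 * r))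
      ((subset_tsupport _).trans hw_supp), fun x hx hux => ?_, fun x hx => ⟨?_, ?_⟩, fun x => ?_⟩
  · beta_reduce
    rw [f.one_of_mem_closedBall hx, hψ_top _ hux, one_mul]
  · exact hw_supp (support_fderiv_subset ℝ hx)
  · by_contra hux
    refine hx (HasFDerivAt.fderiv ((hasFDerivAt_const (0 : ℝ) x).congr_of_eventuallyEq ?_))
    filter_upwards [(isOpen_lt hu.continuous.norm continuous_const).mem_nhds
      (show ‖u x‖ < t from not_le.1 hux)] with z hz
    rw [hψ_zero _ (le_of_lt hz), mul_zero]
  · exact norm_fderiv_mul_comp_le hr.le (hf.differentiable one_ne_zero)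
      (fun x => ⟨f.nonneg, f.le_one⟩) (hc₁ y f rfl) hu hψ hψ_mem hψ_top hψ_deriv x

end Cutoff

/-- The modular `∫ ‖f x‖ ^ p x` of the variable exponent Lebesgue space `L^{p(·)}`, with values in
`[0, ∞]`. -/
noncomputable def modular {X F : Type*} [MeasurableSpace X] [Norm F] (μ : Measure X) (p : X → ℝ)
    (f : X → F) : ℝ≥0∞ :=
  ∫⁻ x, ENNReal.ofReal (‖f x‖ ^ p x) ∂μ

/-- The energy density of `u` at the level `t`: the density `‖Du‖ ^ p` on the set where
`t ≤ ‖u‖ ≤ 2 * t`, and `t ^ r` on the set where `t ≤ ‖u‖`. -/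
noncomputable def levelDensity (p r u : E → ℝ) (t : ℝ) (x : E) : ℝ≥0∞ :=
  {x | t ≤ ‖u x‖ ∧ ‖u x‖ ≤ 2 * t}.indicator (fun x => ENNReal.ofReal (‖fderiv ℝ u x‖ ^ p x)) x +
    {x | t ≤ ‖u x‖}.indicator (fun x => ENNReal.ofReal (t ^ r x)) x

section LocalEstimate

lemma rpow_mul_add_le {c T d p q P : ℝ} (hc : 1 ≤ c) (hT : 1 ≤ T) (hd : 0 ≤ d) (hq : 0 ≤ q)
    (hqp : q ≤ p) (hpP : p ≤ P) :
    (c * (T + d)) ^ q ≤ 2 * (2 * c) ^ P * (d ^ p + T ^ q) := by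
  have hmax : T + d ≤ 2 * max T d := by linarith [le_max_left T d, le_max_right T d]
  have hT_pow : 1 ≤ T ^ q := Real.one_le_rpow hT hq
  have hd_pow : d ^ q ≤ 1 + d ^ p := by
    rcases le_total d 1 with hd₁ | hd₁
    · linarith [Real.rpow_le_one hd hd₁ hq, Real.rpow_nonneg hd p]
    · linarith [Real.rpow_le_rpow_of_exponent_le hd₁ hqp]
  have hmax_pow : max T d ^ q ≤ 2 * (d ^ p + T ^ q) := by
    rcases max_choice T d with h | h <;> rw [h] <;> linarith [Real.rpow_nonneg hd p]
  calc (c * (T + d)) ^ q ≤ (2 * c * max T d) ^ q := by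
        refine Real.rpow_le_rpow (by positivity) ?_ hq
        nlinarith
    _ = (2 * c) ^ q * max T d ^ q := Real.mul_rpow (by positivity) (by positivity)
    _ ≤ (2 * c) ^ P * (2 * (d ^ p + T ^ q)) := by
        gcongr
        · linarith
        · exact hqp.trans hpP
    _ = 2 * (2 * c) ^ P * (d ^ p + T ^ q) := by ring

lemma add_mul_rpow_le {X Y τ : ℝ≥0∞} {θ : ℝ} (hX : X ≤ 1) (hY : Y ≤ 1) (hθ : 1 ≤ θ) :
    (X + τ * Y) ^ θ ≤ 2 ^ θ * (X + τ ^ θ * Y) := by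
  calc (X + τ * Y) ^ θ ≤ 2 ^ (θ - 1) * (X ^ θ + (τ * Y) ^ θ) :=
        ENNReal.rpow_add_le_mul_rpow_add_rpow X (τ * Y) hθ
    _ = 2 ^ (θ - 1) * (X ^ θ + τ ^ θ * Y ^ θ) := by
        rw [ENNReal.mul_rpow_of_nonneg _ _ (zero_le_one.trans hθ)]
    _ ≤ 2 ^ θ * (X + τ ^ θ * Y) := by
        gcongr
        · exact one_le_two
        · linarith
        · exact ENNReal.rpow_le_self_of_le_one hX hθ
        · exact ENNReal.rpow_le_self_of_le_one hY hθ

lemma ofReal_rpow_mul_measure_le_modular {X : Type*} [MeasurableSpace X] {μ : Measure X}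
    {p u : X → ℝ} {A : Set X} {t q : ℝ} (hA : MeasurableSet A) (ht : 1 ≤ t) (hq : 0 ≤ q)
    (hqp : ∀ x ∈ A, q ≤ p x) (htu : ∀ x ∈ A, t ≤ ‖u x‖) :
    ENNReal.ofReal (t ^ q) * μ A ≤ modular μ p u := by
  rw [← setLIntegral_const]
  refine (setLIntegral_mono' hA fun x hx => ENNReal.ofReal_le_ofReal ?_).trans
    (setLIntegral_le_lintegral A _)
  calc t ^ q ≤ ‖u x‖ ^ q := Real.rpow_le_rpow (by linarith) (htu x hx) hq
    _ ≤ ‖u x‖ ^ p x := Real.rpow_le_rpow_of_exponent_le (ht.trans (htu x hx)) (hqp x hx)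

variable [MeasurableSpace E] [BorelSpace E] {μ : Measure E} {p r u w : E → ℝ} {A : Set E}
  {s t T q P θ : ℝ}

lemma lintegral_enorm_fderiv_rpow_le (hA : MeasurableSet A) (hu : Continuous u) {c : ℝ}
    (hc : 1 ≤ c) (hT : 1 ≤ T) (hq : 0 < q) (hqp : ∀ x ∈ A, q ≤ p x) (hpP : ∀ x ∈ A, p x ≤ P)
    (hsupp : support (fderiv ℝ w) ⊆ A ∩ {x | t ≤ ‖u x‖})
    (hw : ∀ x, ‖fderiv ℝ w x‖ ≤
      c * (T + {x | ‖u x‖ ≤ 2 * t}.indicator (fun x => ‖fderiv ℝ u x‖) x)) :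
    ∫⁻ x, ‖fderiv ℝ w x‖ₑ ^ q ∂μ ≤ ENNReal.ofReal (2 * (2 * c) ^ P) *
      ((∫⁻ x in A, {x | t ≤ ‖u x‖ ∧ ‖u x‖ ≤ 2 * t}.indicator
        (fun x => ENNReal.ofReal (‖fderiv ℝ u x‖ ^ p x)) x ∂μ) +
          ENNReal.ofReal (T ^ q) * μ (A ∩ {x | t ≤ ‖u x‖})) := by
  have hAt : MeasurableSet (A ∩ {x | t ≤ ‖u x‖}) :=
    hA.inter (measurableSet_le measurable_const hu.norm.measurable)
  rw [← lintegral_indicator_const hAt, ← lintegral_indicator hA,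
    ← lintegral_add_right _ (measurable_const.indicator hAt),
    ← lintegral_const_mul' _ _ ENNReal.ofReal_ne_top]
  refine lintegral_mono fun x => ?_
  by_cases hx : fderiv ℝ w x = 0
  · beta_reduce
    rw [hx, ← ofReal_norm, norm_zero, ENNReal.ofReal_zero, ENNReal.zero_rpow_of_pos hq]
    exact zero_le
  obtain ⟨hxA, hxt⟩ := hsupp hx
  beta_reduce
  set d := {x | ‖u x‖ ≤ 2 * t}.indicator (fun x => ‖fderiv ℝ u x‖) x with hd
  have hd₀ : 0 ≤ d := indicator_nonneg (fun _ _ => norm_nonneg _) x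
  have hd_pow : {x | t ≤ ‖u x‖ ∧ ‖u x‖ ≤ 2 * t}.indicator
      (fun x => ENNReal.ofReal (‖fderiv ℝ u x‖ ^ p x)) x = ENNReal.ofReal (d ^ p x) := by
    have hp : p x ≠ 0 := (hq.trans_le (hqp x hxA)).ne'
    by_cases hx₂ : ‖u x‖ ≤ 2 * t
    · rw [hd, indicator_of_mem (by exact ⟨hxt, hx₂⟩), indicator_of_mem (by exact hx₂)]
    · rw [hd, indicator_of_notMem (by exact fun h => hx₂ h.2), indicator_of_notMem (by exact hx₂),
        Real.zero_rpow hp, ENNReal.ofReal_zero]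
  rw [indicator_of_mem hxA, indicator_of_mem (show x ∈ A ∩ {x | t ≤ ‖u x‖} from ⟨hxA, hxt⟩), hd_pow,
    ← ENNReal.ofReal_add (by positivity) (by positivity), ← ENNReal.ofReal_mul (by positivity),
    ← ofReal_norm, ENNReal.ofReal_rpow_of_nonneg (norm_nonneg _) hq.le]
  exact ENNReal.ofReal_le_ofReal ((Real.rpow_le_rpow (norm_nonneg _) (hw x) hq.le).trans
    (rpow_mul_add_le hc hT hd₀ hq.le (hqp x hxA) (hpP x hxA)))

/-- Both terms of the energy are powers of quantities at most `1`, which absorbs the exponent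
`θ ≥ 1` up to a factor `t ^ (s * q * θ)`. -/
lemma rpow_add_le_setLIntegral_levelDensity (hA : MeasurableSet A) (hu : Continuous u)
    (hu_modular : modular μ p u ≤ 1) (hDu_modular : modular μ p (fderiv ℝ u) ≤ 1) (ht : 1 ≤ t)
    (hq : 0 ≤ q) (hθ : 1 ≤ θ) (hqp : ∀ x ∈ A, q ≤ p x) (hr : ∀ x ∈ A, q + s * (q * θ) ≤ r x) :
    ((∫⁻ x in A, {x | t ≤ ‖u x‖ ∧ ‖u x‖ ≤ 2 * t}.indicator
      (fun x => ENNReal.ofReal (‖fderiv ℝ u x‖ ^ p x)) x ∂μ) +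
        ENNReal.ofReal ((t ^ (1 + s)) ^ q) * μ (A ∩ {x | t ≤ ‖u x‖})) ^ θ ≤
      2 ^ θ * ∫⁻ x in A, levelDensity p r u t x ∂μ := by
  have ht₀ : 0 < t := by linarith
  have hS : MeasurableSet {x | t ≤ ‖u x‖} := measurableSet_le measurable_const hu.norm.measurable
  set X := ∫⁻ x in A, {x | t ≤ ‖u x‖ ∧ ‖u x‖ ≤ 2 * t}.indicator
    (fun x => ENNReal.ofReal (‖fderiv ℝ u x‖ ^ p x)) x ∂μ
  set Y := ENNReal.ofReal (t ^ q) * μ (A ∩ {x | t ≤ ‖u x‖})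
  have hX : X ≤ 1 := ((setLIntegral_le_lintegral _ _).trans
    (lintegral_mono fun x => indicator_le_self _ _ x)).trans hDu_modular
  have hY : Y ≤ 1 := (ofReal_rpow_mul_measure_le_modular (hA.inter hS) ht hq
    (fun x hx => hqp x hx.1) fun x hx => hx.2).trans hu_modular
  have hτ : ENNReal.ofReal ((t ^ (1 + s)) ^ q) * μ (A ∩ {x | t ≤ ‖u x‖}) =
      ENNReal.ofReal (t ^ (s * q)) * Y := by
    rw [← mul_assoc, ← ENNReal.ofReal_mul (by positivity), ← Real.rpow_mul ht₀.le,
      ← Real.rpow_add ht₀, add_mul, one_mul, add_comm]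
  have hlevel : ENNReal.ofReal (t ^ (s * q)) ^ θ * Y ≤
      ∫⁻ x in A, {x | t ≤ ‖u x‖}.indicator (fun x => ENNReal.ofReal (t ^ r x)) x ∂μ := by
    rw [ENNReal.ofReal_rpow_of_nonneg (by positivity) (by linarith), ← mul_assoc,
      ← ENNReal.ofReal_mul (by positivity), ← Real.rpow_mul ht₀.le, ← Real.rpow_add ht₀,
      setLIntegral_indicator hS, ← setLIntegral_const, inter_comm]
    refine setLIntegral_mono' (hS.inter hA) fun x hx => ENNReal.ofReal_le_ofReal ?_
    exact Real.rpow_le_rpow_of_exponent_le ht (by linarith [hr x hx.2])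
  rw [hτ]
  refine (add_mul_rpow_le hX hY hθ).trans ?_
  gcongr
  exact (add_le_add_right hlevel X).trans (le_lintegral_add _ _)

lemma rpow_lintegral_enorm_fderiv_le (hA : MeasurableSet A) (hu : Continuous u)
    (hu_modular : modular μ p u ≤ 1) (hDu_modular : modular μ p (fderiv ℝ u) ≤ 1) {c : ℝ≥0}
    (ht : 1 ≤ t) (hs : 0 ≤ s) (hq : 0 < q) (hθ : 1 ≤ θ) (hqp : ∀ x ∈ A, q ≤ p x)
    (hpP : ∀ x ∈ A, p x ≤ P) (hr : ∀ x ∈ A, q + s * (q * θ) ≤ r x)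
    (hsupp : support (fderiv ℝ w) ⊆ A ∩ {x | t ≤ ‖u x‖})
    (hw : ∀ x, ‖fderiv ℝ w x‖ ≤
      c * (t / (t ^ (-s) / 16) + {x | ‖u x‖ ≤ 2 * t}.indicator (fun x => ‖fderiv ℝ u x‖) x)) :
    (∫⁻ x, ‖fderiv ℝ w x‖ₑ ^ q ∂μ) ^ θ ≤
      (ENNReal.ofReal (2 * (2 * (16 * (1 + c))) ^ P) * 2) ^ θ *
        ∫⁻ x in A, levelDensity p r u t x ∂μ := by
  have ht₀ : 0 < t := by linarith
  have hθ₀ : 0 ≤ θ := zero_le_one.trans hθ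
  have hradius : t / (t ^ (-s) / 16) = 16 * t ^ (1 + s) := by
    rw [Real.rpow_neg ht₀.le, Real.rpow_add ht₀, Real.rpow_one]
    field_simp
  have hw' (x : E) : ‖fderiv ℝ w x‖ ≤ 16 * (1 + c) *
      (t ^ (1 + s) + {x | ‖u x‖ ≤ 2 * t}.indicator (fun x => ‖fderiv ℝ u x‖) x) := by
    have hind : 0 ≤ {x | ‖u x‖ ≤ 2 * t}.indicator (fun x => ‖fderiv ℝ u x‖) x :=
      indicator_nonneg (fun _ _ => norm_nonneg _) x
    have hwx := hw x
    rw [hradius] at hwx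
    nlinarith [Real.rpow_nonneg ht₀.le (1 + s), mul_nonneg c.coe_nonneg hind]
  refine (ENNReal.rpow_le_rpow (lintegral_enorm_fderiv_rpow_le hA hu (by linarith [c.coe_nonneg])
    (Real.one_le_rpow ht (by linarith)) hq hqp hpP hsupp hw') hθ₀).trans ?_
  rw [ENNReal.mul_rpow_of_nonneg _ _ hθ₀, ENNReal.mul_rpow_of_nonneg _ _ hθ₀, mul_assoc]
  gcongr
  exact rpow_add_le_setLIntegral_levelDensity hA hu hu_modular hDu_modular ht hq.le hθ hqp hr

lemma exists_truncation_lintegral_rpow_sobolevConj_le [FiniteDimensional ℝ E] (μ : Measure E)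
    [μ.IsAddHaarMeasure] (hP : P < finrank ℝ E) (hpP : ∀ x, p x ≤ P) (hs : 0 ≤ s) :
    ∃ K : ℝ≥0, ∀ u : E → ℝ, ContDiff ℝ 1 u → modular μ p u ≤ 1 → modular μ p (fderiv ℝ u) ≤ 1 →
      ∀ t : ℝ, 1 ≤ t → ∀ (y : E) (q : ℝ), 1 ≤ q →
        (∀ x ∈ closedBall y (2 * (t ^ (-s) / 16)), q ≤ p x) →
        ∃ w : E → ℝ, (∀ x ∈ closedBall y (t ^ (-s) / 16), 2 * t ≤ ‖u x‖ → w x = t) ∧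
          ∫⁻ x, ‖w x‖ₑ ^ sobolevConj (finrank ℝ E) q ∂μ ≤
            K * ∫⁻ x in closedBall y (2 * (t ^ (-s) / 16)),
              levelDensity p (fun x => p x + s * sobolevConj (finrank ℝ E) (p x)) u t x ∂μ := by
  obtain ⟨S, hS⟩ := exists_lintegral_rpow_sobolevConj_le (F := ℝ) μ hP
  obtain ⟨c, hc⟩ := exists_contDiff_truncation E
  set n : ℝ := (finrank ℝ E : ℝ)
  obtain ⟨G, hG⟩ : ∃ G : ℝ≥0, (G : ℝ≥0∞) =
      max 1 (ENNReal.ofReal (2 * (2 * (16 * (1 + c))) ^ P) * 2) :=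
    ⟨_, ENNReal.coe_toNNReal (by finiteness)⟩
  refine ⟨S * G ^ (n / (n - P)), fun u hu hu_modular hDu_modular t ht y q hq hqp => ?_⟩
  have ht₀ : 0 < t := by linarith
  set ρ := t ^ (-s) / 16
  have hρ₀ : 0 < ρ := by positivity
  obtain ⟨w, hw, hw_supp, hw_eq, hDw_supp, hDw⟩ := hc u hu t ρ ht₀ hρ₀ y
  have hqP : q ≤ P := (hqp y (mem_closedBall_self (by positivity))).trans (hpP y)
  have hnP : 0 < n - P := sub_pos.2 hP
  have hnq : n - P ≤ n - q := sub_le_sub_left hqP n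
  have hθ : 1 ≤ n / (n - q) := (one_le_div (hnP.trans_le hnq)).2 (by linarith)
  have hr : ∀ x ∈ closedBall y (2 * ρ),
      q + s * (q * (n / (n - q))) ≤ p x + s * sobolevConj n (p x) := fun x hx => by
    rw [← sobolevConj_eq_mul]
    gcongr
    · exact hqp x hx
    · exact sobolevConj_le_sobolevConj (hqp x hx) ((hpP x).trans_lt hP)
  refine ⟨w, hw_eq, (hS q hq hqP w hw hw_supp).trans ?_⟩
  rw [ENNReal.coe_mul, mul_assoc]
  gcongr
  refine (rpow_lintegral_enorm_fderiv_le measurableSet_closedBall hu.continuous hu_modular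
    hDu_modular ht hs (by linarith) hθ hqp (fun x _ => hpP x) hr hDw_supp hDw).trans ?_
  rw [ENNReal.coe_rpow_of_nonneg _ (by positivity)]
  gcongr ?_ * _
  calc _ ≤ (G : ℝ≥0∞) ^ (n / (n - q)) :=
        ENNReal.rpow_le_rpow ((le_max_right _ _).trans_eq hG.symm) (by linarith)
    _ ≤ (G : ℝ≥0∞) ^ (n / (n - P)) :=
        ENNReal.rpow_le_rpow_of_exponent_le ((le_max_left _ _).trans_eq hG.symm) (by gcongr)

variable {C : ℝ≥0}

lemma setLIntegral_rpow_sobolevConj_le {X : Type*} [MetricSpace X] [MeasurableSpace X]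
    {μ : Measure X} {p u w : X → ℝ} (hp : LogHolderWith C p) {n : ℝ} (hP : P < n)
    (hpP : ∀ x, p x ≤ P) (hp_nonneg : ∀ x, 0 ≤ p x) (hs : 0 < s) (ht : 1 ≤ t)
    {A : Set X} (hA : MeasurableSet A) (hw : ∀ x ∈ A, 2 * t ≤ ‖u x‖ → w x = t) {x₀ : X}
    (hdist : ∀ x ∈ A, dist x x₀ ≤ t ^ (-s) / 4) :
    ∫⁻ x in A, {x | 2 * t ≤ ‖u x‖}.indicator
      (fun x => ENNReal.ofReal (t ^ sobolevConj n (p x))) x ∂μ ≤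
        ENNReal.ofReal (Real.exp ((n / (n - P)) ^ 2 * (C / s))) *
          ∫⁻ x, ‖w x‖ₑ ^ sobolevConj n (p x₀) ∂μ := by
  rw [← lintegral_const_mul' _ _ ENNReal.ofReal_ne_top]
  refine (setLIntegral_mono' hA fun x hx => ?_).trans (setLIntegral_le_lintegral A _)
  refine indicator_apply_le' (fun hux => ?_) fun _ => zero_le
  have ht₀ : 0 ≤ t := by linarith
  have hconj : 0 ≤ sobolevConj n (p x₀) :=
    (hp_nonneg x₀).trans (le_sobolevConj (hp_nonneg x₀) ((hpP x₀).trans_lt hP))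
  rw [hw x hx hux, Real.enorm_of_nonneg ht₀, ENNReal.ofReal_rpow_of_nonneg ht₀ hconj,
    ← ENNReal.ofReal_mul (Real.exp_pos _).le]
  exact ENNReal.ofReal_le_ofReal (hp.rpow_sobolevConj_le hP hpP hs ht (hdist x hx))

lemma exists_setLIntegral_closedBall_le [FiniteDimensional ℝ E] (μ : Measure E)
    [μ.IsAddHaarMeasure] (hp : LogHolderWith C p) (hP : P < finrank ℝ E) (hp_one : ∀ x, 1 ≤ p x)
    (hpP : ∀ x, p x ≤ P) (hs : 0 < s) :
    ∃ K : ℝ≥0, ∀ u : E → ℝ, ContDiff ℝ 1 u → modular μ p u ≤ 1 → modular μ p (fderiv ℝ u) ≤ 1 →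
      ∀ t : ℝ, 1 ≤ t → ∀ y : E,
        ∫⁻ x in closedBall y (t ^ (-s) / 16), {x | 2 * t ≤ ‖u x‖}.indicator
          (fun x => ENNReal.ofReal (t ^ sobolevConj (finrank ℝ E) (p x))) x ∂μ ≤
        K * ∫⁻ x in closedBall y (2 * (t ^ (-s) / 16)),
          levelDensity p (fun x => p x + s * sobolevConj (finrank ℝ E) (p x)) u t x ∂μ := by
  obtain ⟨K, hK⟩ := exists_truncation_lintegral_rpow_sobolevConj_le μ hP hpP hs.le
  set n : ℝ := (finrank ℝ E : ℝ)
  refine ⟨(Real.exp ((n / (n - P)) ^ 2 * (C / s))).toNNReal * K,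
    fun u hu hu_modular hDu_modular t ht y => ?_⟩
  have hρ : 0 < t ^ (-s) / 16 := by positivity
  obtain ⟨x₀, hx₀, hx₀_min⟩ := (isCompact_closedBall y (2 * (t ^ (-s) / 16))).exists_isMinOn
    ⟨y, mem_closedBall_self (by positivity)⟩ hp.continuous.continuousOn
  obtain ⟨w, hw_eq, hw⟩ := hK u hu hu_modular hDu_modular t ht y (p x₀) (hp_one x₀)
    fun x hx => hx₀_min hx
  have hdist : ∀ x ∈ closedBall y (t ^ (-s) / 16), dist x x₀ ≤ t ^ (-s) / 4 := fun x hx => by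
    linarith [dist_triangle x y x₀, mem_closedBall.1 hx, mem_closedBall'.1 hx₀]
  rw [ENNReal.coe_mul, mul_assoc]
  exact (setLIntegral_rpow_sobolevConj_le hp hP hpP (fun x => zero_le_one.trans (hp_one x)) hs ht
    measurableSet_closedBall hw_eq hdist).trans (by gcongr; rfl)

end LocalEstimate

section Averaging

variable [FiniteDimensional ℝ E] [MeasurableSpace E] [BorelSpace E] {μ : Measure E}
  [μ.IsAddHaarMeasure] {f g : E → ℝ≥0∞} {r : ℝ}

lemma lintegral_setLIntegral_closedBall (hf : Measurable f) (r : ℝ) :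
    ∫⁻ y, ∫⁻ x in closedBall y r, f x ∂μ ∂μ = μ (closedBall 0 r) * ∫⁻ x, f x ∂μ := by
  have hball : MeasurableSet {z : E × E | dist z.1 z.2 ≤ r} :=
    measurableSet_le measurable_dist measurable_const
  calc ∫⁻ y, ∫⁻ x in closedBall y r, f x ∂μ ∂μ
      = ∫⁻ y, ∫⁻ x, {z : E × E | dist z.1 z.2 ≤ r}.indicator (fun z => f z.2) (y, x) ∂μ ∂μ := by
        refine lintegral_congr fun y => ?_
        rw [← lintegral_indicator measurableSet_closedBall]
        refine lintegral_congr fun x => ?_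
        simp only [indicator, mem_closedBall', mem_ofPred_eq]
    _ = ∫⁻ x, ∫⁻ y, {z : E × E | dist z.1 z.2 ≤ r}.indicator (fun z => f z.2) (y, x) ∂μ ∂μ :=
        lintegral_lintegral_swap ((hf.comp measurable_snd).indicator hball).aemeasurable
    _ = ∫⁻ x, μ (closedBall 0 r) * f x ∂μ := by
        refine lintegral_congr fun x => ?_
        rw [← Measure.addHaar_closedBall_center μ x, mul_comm,
          ← lintegral_indicator_const measurableSet_closedBall]
        refine lintegral_congr fun y => ?_
        simp only [indicator, mem_closedBall, mem_ofPred_eq]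
    _ = μ (closedBall 0 r) * ∫⁻ x, f x ∂μ := lintegral_const_mul _ hf

lemma lintegral_le_of_forall_setLIntegral_closedBall_le (hf : Measurable f) (hg : Measurable g)
    (hr : 0 < r) {a : ℝ} (ha : 0 ≤ a) {K : ℝ≥0}
    (hfg : ∀ y, ∫⁻ x in closedBall y r, f x ∂μ ≤ K * ∫⁻ x in closedBall y (a * r), g x ∂μ) :
    ∫⁻ x, f x ∂μ ≤ K * ENNReal.ofReal (a ^ finrank ℝ E) * ∫⁻ x, g x ∂μ := by
  have hball₀ : μ (closedBall 0 r) ≠ 0 := (measure_closedBall_pos μ 0 hr).ne'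
  have hball : μ (closedBall 0 r) ≠ ∞ := measure_closedBall_lt_top.ne
  refine (ENNReal.mul_le_mul_iff_right hball₀ hball).1 ?_
  calc μ (closedBall 0 r) * ∫⁻ x, f x ∂μ
      = ∫⁻ y, ∫⁻ x in closedBall y r, f x ∂μ ∂μ := (lintegral_setLIntegral_closedBall hf r).symm
    _ ≤ ∫⁻ y, K * ∫⁻ x in closedBall y (a * r), g x ∂μ ∂μ := lintegral_mono hfg
    _ = K * (μ (closedBall 0 (a * r)) * ∫⁻ x, g x ∂μ) := by
        rw [lintegral_const_mul' _ _ ENNReal.coe_ne_top, lintegral_setLIntegral_closedBall hg]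
    _ = μ (closedBall 0 r) * (K * ENNReal.ofReal (a ^ finrank ℝ E) * ∫⁻ x, g x ∂μ) := by
        rw [Measure.addHaar_closedBall_mul μ 0 ha hr.le]
        ring

end Averaging

section Dyadic

variable {a p r e s Q : ℝ}

lemma sum_range_ite_two_pow_le (ha : 0 ≤ a) (j : ℕ) :
    ∑ k ∈ Finset.range j, (if (2 : ℝ) ^ k ≤ a then (2 : ℝ) ^ k else 0) ≤ 2 * a := by
  suffices h : ∑ k ∈ Finset.range j, (if (2 : ℝ) ^ k ≤ a then (2 : ℝ) ^ k else 0) ≤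
      min (2 ^ j) (2 * a) from h.trans (min_le_right _ _)
  induction j with
  | zero => simpa using ha
  | succ j ih =>
    rw [Finset.sum_range_succ, pow_succ]
    have hj : (0 : ℝ) < 2 ^ j := by positivity
    split_ifs with hja
    · refine le_min ?_ ?_ <;> linarith [ih.trans (min_le_left _ _)]
    · refine le_min ?_ ?_ <;> linarith [ih.trans (min_le_left _ _), ih.trans (min_le_right _ _)]

lemma sum_range_ite_two_pow_rpow_le (ha : 0 ≤ a) (hr : 1 ≤ r) (j : ℕ) :
    ∑ k ∈ Finset.range j, (if (2 : ℝ) ^ k ≤ a then ((2 : ℝ) ^ k) ^ r else 0) ≤ 2 * a ^ r := by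
  have hsplit (x : ℝ) (hx : 0 ≤ x) : x ^ r = x ^ (r - 1) * x := by
    rw [← Real.rpow_add_one' hx (by linarith), sub_add_cancel]
  calc ∑ k ∈ Finset.range j, (if (2 : ℝ) ^ k ≤ a then ((2 : ℝ) ^ k) ^ r else 0)
      ≤ ∑ k ∈ Finset.range j, a ^ (r - 1) * (if (2 : ℝ) ^ k ≤ a then (2 : ℝ) ^ k else 0) := by
        gcongr with k
        split_ifs with hk
        · rw [hsplit _ (by positivity)]
          gcongr
        · rw [mul_zero]
    _ ≤ a ^ (r - 1) * (2 * a) := by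
        rw [← Finset.mul_sum]
        gcongr
        exact sum_range_ite_two_pow_le ha j
    _ = 2 * a ^ r := by
        rw [hsplit a ha]
        ring

lemma sum_range_ite_mem_Icc_two_pow_le (ha : 0 ≤ a) (j : ℕ) :
    ∑ k ∈ Finset.range j, (if (2 : ℝ) ^ k ≤ a ∧ a ≤ 2 * 2 ^ k then (1 : ℝ) else 0) ≤ 4 := by
  rcases ha.eq_or_lt with rfl | ha
  · simp [(pow_pos (two_pos : (0 : ℝ) < 2) _).not_ge]
  calc ∑ k ∈ Finset.range j, (if (2 : ℝ) ^ k ≤ a ∧ a ≤ 2 * 2 ^ k then (1 : ℝ) else 0)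
      ≤ ∑ k ∈ Finset.range j, 2 / a * (if (2 : ℝ) ^ k ≤ a then (2 : ℝ) ^ k else 0) := by
        gcongr with k
        split_ifs with h h' h'
        · rw [div_mul_eq_mul_div, one_le_div ha]
          exact h.2
        · exact absurd h.1 h'
        · positivity
        · rw [mul_zero]
    _ ≤ 2 / a * (2 * a) := by
        rw [← Finset.mul_sum]
        gcongr
        exact sum_range_ite_two_pow_le ha.le j
    _ = 4 := by
        field_simp
        norm_num

lemma exists_min_two_pow_le (ha : 2 ≤ a) (m : ℕ) :
    ∃ k ≤ m, 2 * 2 ^ k ≤ a ∧ min a (2 ^ m) ≤ 4 * 2 ^ k := by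
  obtain ⟨n, hn, hna⟩ := exists_nat_pow_near (show (1 : ℝ) ≤ a / 2 by linarith) one_lt_two
  refine ⟨min n m, min_le_right n m, ?_, ?_⟩
  · linarith [pow_le_pow_right₀ (one_le_two : (1 : ℝ) ≤ 2) (min_le_left n m)]
  · rcases min_choice n m with h | h <;> rw [h]
    · rw [pow_succ] at hna
      linarith [min_le_left a (2 ^ m)]
    · linarith [min_le_right a (2 ^ m), pow_pos (two_pos : (0 : ℝ) < 2) m]

lemma min_two_pow_rpow_le (ha : 0 ≤ a) (hp : 0 ≤ p) (hpe : p ≤ e) (heQ : e ≤ Q) (m : ℕ) :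
    min a (2 ^ m) ^ e ≤ 2 ^ Q * a ^ p + 4 ^ Q *
      ∑ k ∈ Finset.range (m + 1), (if 2 * (2 : ℝ) ^ k ≤ a then ((2 : ℝ) ^ k) ^ e else 0) := by
  have he : 0 ≤ e := hp.trans hpe
  have hmin : 0 ≤ min a (2 ^ m) := le_min ha (by positivity)
  have hterm (k : ℕ) : 0 ≤ if 2 * (2 : ℝ) ^ k ≤ a then ((2 : ℝ) ^ k) ^ e else 0 := by positivity
  rcases le_total a 2 with ha₂ | ha₂
  · refine le_add_of_le_of_nonneg ?_
      (mul_nonneg (by positivity) (Finset.sum_nonneg fun k _ => hterm k))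
    calc min a (2 ^ m) ^ e ≤ (2 * (a / 2)) ^ e :=
          Real.rpow_le_rpow hmin ((min_le_left _ _).trans (by linarith)) he
      _ = 2 ^ e * (a / 2) ^ e := Real.mul_rpow two_pos.le (by positivity)
      _ ≤ 2 ^ Q * (a / 2) ^ p := by
          gcongr ?_ * ?_
          · exact Real.rpow_le_rpow_of_exponent_le one_le_two heQ
          · exact Real.rpow_le_rpow_of_exponent_ge' (by positivity) (by linarith) hp hpe
      _ ≤ 2 ^ Q * a ^ p := by
          gcongr
          linarith
  · obtain ⟨k, hkm, hk, hmin_le⟩ := exists_min_two_pow_le ha₂ m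
    refine le_add_of_nonneg_of_le (by positivity) ?_
    calc min a (2 ^ m) ^ e ≤ (4 * 2 ^ k) ^ e := Real.rpow_le_rpow hmin hmin_le he
      _ = 4 ^ e * ((2 : ℝ) ^ k) ^ e := Real.mul_rpow (by positivity) (by positivity)
      _ ≤ 4 ^ Q * if 2 * (2 : ℝ) ^ k ≤ a then ((2 : ℝ) ^ k) ^ e else 0 := by
          rw [if_pos hk]
          gcongr
          norm_num
      _ ≤ _ := by
          gcongr
          exact Finset.single_le_sum (fun k _ => hterm k)
            (Finset.mem_range.2 (Nat.lt_succ_of_le hkm))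

lemma exists_rpow_le_mul_rpow_add {δ : ℝ} (hδ : 0 < δ) (hs : 0 < s) (Q : ℝ) :
    ∃ C : ℝ≥0, ∀ a p e : ℝ, 0 ≤ a → 0 ≤ p → 0 ≤ e → e ≤ Q → p + s * e + s ≤ e →
      a ^ (p + s * e) ≤ δ * a ^ e + C * a ^ p := by
  set T : ℝ := max 1 (δ⁻¹ ^ s⁻¹)
  have hT : 1 ≤ T := le_max_left _ _
  refine ⟨(T ^ (s * Q)).toNNReal, fun a p e ha hp he heQ hgap => ?_⟩
  rw [Real.coe_toNNReal _ (by positivity)]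
  rcases le_total T a with hTa | haT
  · have ha₁ : 1 ≤ a := hT.trans hTa
    have hδa : δ⁻¹ ≤ a ^ s := by
      rw [← Real.rpow_inv_le_iff_of_pos (by positivity) ha hs]
      exact (le_max_right _ _).trans hTa
    refine le_add_of_le_of_nonneg ?_ (by positivity)
    calc a ^ (p + s * e) = δ * (δ⁻¹ * a ^ (p + s * e)) := by rw [mul_inv_cancel_left₀ hδ.ne']
      _ ≤ δ * (a ^ s * a ^ (p + s * e)) := by gcongr
      _ = δ * a ^ (s + (p + s * e)) := by rw [Real.rpow_add (by linarith) s]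
      _ ≤ δ * a ^ e := by
          gcongr
          linarith
  · refine le_add_of_nonneg_of_le (by positivity) ?_
    calc a ^ (p + s * e) = a ^ (s * e) * a ^ p := by
          rw [Real.rpow_add_of_nonneg ha hp (by positivity), mul_comm]
      _ ≤ T ^ (s * e) * a ^ p := by gcongr
      _ ≤ T ^ (s * Q) * a ^ p := by gcongr

end Dyadic

section Modular

variable {X F : Type*} [MeasurableSpace X] [NormedAddCommGroup F] {μ : Measure X}
  {p e : X → ℝ} {u : X → ℝ} {s Q : ℝ}

lemma measurable_ofReal_norm_rpow (hp : Measurable p) (hu : Measurable u) :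
    Measurable fun x => ENNReal.ofReal (‖u x‖ ^ p x) :=
  (hu.norm.pow hp).ennreal_ofReal

lemma modular_mono_norm {f g : X → ℝ} (hp : ∀ x, 0 ≤ p x) (hfg : ∀ x, ‖f x‖ ≤ ‖g x‖) :
    modular μ p f ≤ modular μ p g :=
  lintegral_mono fun x =>
    ENNReal.ofReal_le_ofReal (Real.rpow_le_rpow (norm_nonneg _) (hfg x) (hp x))

lemma norm_min_norm_two_pow (a : F) (m : ℕ) : ‖min ‖a‖ (2 ^ m)‖ = min ‖a‖ (2 ^ m) :=
  Real.norm_of_nonneg (by positivity)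

lemma modular_min_two_pow_le (hp : Measurable p) (he : Measurable e) (hu : Measurable u)
    (hp_nonneg : ∀ x, 0 ≤ p x) (hpe : ∀ x, p x ≤ e x) (heQ : ∀ x, e x ≤ Q) (m : ℕ) :
    modular μ e (fun x => min ‖u x‖ (2 ^ m)) ≤
      ENNReal.ofReal (2 ^ Q) * modular μ p u + ENNReal.ofReal (4 ^ Q) *
        ∑ k ∈ Finset.range (m + 1), ∫⁻ x, {x | 2 * 2 ^ k ≤ ‖u x‖}.indicator
          (fun x => ENNReal.ofReal ((2 ^ k) ^ e x)) x ∂μ := by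
  have hlevel (k : ℕ) : Measurable ({x | 2 * 2 ^ k ≤ ‖u x‖}.indicator
      fun x => ENNReal.ofReal (((2 : ℝ) ^ k) ^ e x)) :=
    (measurable_const.pow he).ennreal_ofReal.indicator
      (measurableSet_le measurable_const hu.norm)
  rw [modular, modular, ← lintegral_const_mul _ (measurable_ofReal_norm_rpow hp hu),
    ← lintegral_finsetSum _ fun k _ => hlevel k,
    ← lintegral_const_mul _ (Finset.measurable_fun_sum _ fun k _ => hlevel k),
    ← lintegral_add_left ((measurable_ofReal_norm_rpow hp hu).const_mul _)]
  refine lintegral_mono fun x => ?_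
  have hsum : ∑ k ∈ Finset.range (m + 1), {x | 2 * 2 ^ k ≤ ‖u x‖}.indicator
      (fun x => ENNReal.ofReal (((2 : ℝ) ^ k) ^ e x)) x =
        ENNReal.ofReal (∑ k ∈ Finset.range (m + 1),
          if 2 * (2 : ℝ) ^ k ≤ ‖u x‖ then ((2 : ℝ) ^ k) ^ e x else 0) := by
    rw [ENNReal.ofReal_sum_of_nonneg fun k _ => by positivity]
    refine Finset.sum_congr rfl fun k _ => ?_
    simp only [indicator, mem_ofPred_eq, apply_ite ENNReal.ofReal, ENNReal.ofReal_zero]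
  rw [hsum, norm_min_norm_two_pow, ← ENNReal.ofReal_mul (by positivity),
    ← ENNReal.ofReal_mul (by positivity),
    ← ENNReal.ofReal_add (by positivity)
      (mul_nonneg (by positivity) (Finset.sum_nonneg fun k _ => by positivity))]
  exact ENNReal.ofReal_le_ofReal
    (min_two_pow_rpow_le (norm_nonneg _) (hp_nonneg x) (hpe x) (heQ x) m)

lemma modular_min_two_pow_lt_top (hp : ∀ x, 0 ≤ p x) (hpe : ∀ x, p x ≤ e x) (heQ : ∀ x, e x ≤ Q)
    (hu : modular μ p u ≠ ∞) (m : ℕ) : modular μ e (fun x => min ‖u x‖ (2 ^ m)) < ∞ := by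
  have hm : (1 : ℝ) ≤ 2 ^ m := one_le_pow₀ one_le_two
  refine lt_of_le_of_lt ?_ (ENNReal.mul_lt_top (ENNReal.ofReal_lt_top (r := (2 ^ m) ^ Q))
    hu.lt_top)
  rw [modular, modular, ← lintegral_const_mul' _ _ ENNReal.ofReal_ne_top]
  refine lintegral_mono fun x => ?_
  rw [norm_min_norm_two_pow, ← ENNReal.ofReal_mul (by positivity)]
  refine ENNReal.ofReal_le_ofReal ?_
  set a := min ‖u x‖ (2 ^ m)
  have ha : 0 ≤ a := by positivity
  calc a ^ e x = a ^ (e x - p x) * a ^ p x := by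
        rw [← Real.rpow_add_of_nonneg ha (sub_nonneg.2 (hpe x)) (hp x), sub_add_cancel]
    _ ≤ (2 ^ m) ^ (e x - p x) * ‖u x‖ ^ p x := by
        gcongr
        · exact sub_nonneg.2 (hpe x)
        · exact min_le_right _ _
        · exact hp x
        · exact min_le_left _ _
    _ ≤ (2 ^ m) ^ Q * ‖u x‖ ^ p x := by
        gcongr
        linarith [hp x, heQ x]

lemma exists_modular_le_mul_modular_add (μ : Measure X) {δ : ℝ≥0} (hδ : 0 < δ) (hs : 0 < s)
    (Q : ℝ) :
    ∃ C : ℝ≥0, ∀ {p e v : X → ℝ}, Measurable p → Measurable v → (∀ x, 0 ≤ p x) →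
      (∀ x, 0 ≤ e x) → (∀ x, e x ≤ Q) → (∀ x, p x + s * e x + s ≤ e x) →
      modular μ (fun x => p x + s * e x) v ≤
        δ * modular μ e v + C * modular μ p v := by
  obtain ⟨C, hC⟩ := exists_rpow_le_mul_rpow_add hδ hs Q
  refine ⟨C, fun {p e v} hp hv hp_nonneg he_nonneg heQ hgap => ?_⟩
  simp only [modular]
  rw [← lintegral_const_mul' _ _ ENNReal.coe_ne_top,
    ← lintegral_const_mul' _ _ ENNReal.coe_ne_top,
    ← lintegral_add_right _ ((measurable_ofReal_norm_rpow hp hv).const_mul _)]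
  refine lintegral_mono fun x => ?_
  beta_reduce
  rw [← ENNReal.ofReal_coe_nnreal, ← ENNReal.ofReal_coe_nnreal, ← ENNReal.ofReal_mul δ.coe_nonneg,
    ← ENNReal.ofReal_mul C.coe_nonneg,
    ← ENNReal.ofReal_add (by positivity) (by positivity)]
  exact ENNReal.ofReal_le_ofReal
    (hC _ _ _ (norm_nonneg _) (hp_nonneg x) (he_nonneg x) (heQ x) (hgap x))

lemma modular_le_of_forall_min_two_pow (he : Measurable e) (hu : Measurable u) {K : ℝ≥0∞}
    (h : ∀ m : ℕ, modular μ e (fun x => min ‖u x‖ (2 ^ m)) ≤ K) : modular μ e u ≤ K := by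
  have hlim (x : X) : liminf (fun m : ℕ => ENNReal.ofReal (‖min ‖u x‖ (2 ^ m)‖ ^ e x)) atTop =
      ENNReal.ofReal (‖u x‖ ^ e x) := by
    refine Tendsto.liminf_eq (tendsto_const_nhds.congr' ?_)
    filter_upwards [(tendsto_pow_atTop_atTop_of_one_lt (one_lt_two (α := ℝ))).eventually_ge_atTop
      ‖u x‖] with m hm
    rw [norm_min_norm_two_pow, min_eq_left hm]
  rw [modular, ← lintegral_congr hlim]
  refine (lintegral_liminf_le fun m =>
    measurable_ofReal_norm_rpow he (hu.norm.min measurable_const)).trans ?_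
  exact liminf_le_of_le (by isBoundedDefault) fun b hb => (hb.exists.choose_spec).trans (h _)

end Modular

section GlobalEstimate

variable {p r e u : E → ℝ} {s Q : ℝ}

lemma sum_levelDensity_two_pow_le {x : E} (hr : 1 ≤ r x) (m : ℕ) :
    ∑ k ∈ Finset.range (m + 1), levelDensity p r u (2 ^ k) x ≤
      4 * ENNReal.ofReal (‖fderiv ℝ u x‖ ^ p x) +
        2 * ENNReal.ofReal (‖min ‖u x‖ (2 ^ m)‖ ^ r x) := by
  have hmin : 0 ≤ min ‖u x‖ (2 ^ m) := by positivity
  simp only [levelDensity]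
  rw [Finset.sum_add_distrib]
  refine add_le_add ?_ ?_
  · calc _ = ∑ k ∈ Finset.range (m + 1), ENNReal.ofReal
            (if (2 : ℝ) ^ k ≤ ‖u x‖ ∧ ‖u x‖ ≤ 2 * 2 ^ k then (1 : ℝ) else 0) *
              ENNReal.ofReal (‖fderiv ℝ u x‖ ^ p x) := by
          simp only [indicator, mem_ofPred_eq, apply_ite ENNReal.ofReal, ENNReal.ofReal_zero,
            ENNReal.ofReal_one, ite_mul, one_mul, zero_mul]
      _ = ENNReal.ofReal (∑ k ∈ Finset.range (m + 1),
            if (2 : ℝ) ^ k ≤ ‖u x‖ ∧ ‖u x‖ ≤ 2 * 2 ^ k then (1 : ℝ) else 0) *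
              ENNReal.ofReal (‖fderiv ℝ u x‖ ^ p x) := by
          rw [← Finset.sum_mul, ENNReal.ofReal_sum_of_nonneg fun k _ => by positivity]
      _ ≤ _ := by
          gcongr
          rw [← ENNReal.ofReal_ofNat 4]
          exact ENNReal.ofReal_le_ofReal (sum_range_ite_mem_Icc_two_pow_le (norm_nonneg _) _)
  · calc _ = ENNReal.ofReal (∑ k ∈ Finset.range (m + 1),
            if (2 : ℝ) ^ k ≤ min ‖u x‖ (2 ^ m) then ((2 : ℝ) ^ k) ^ r x else 0) := by
          rw [ENNReal.ofReal_sum_of_nonneg fun k _ => by positivity]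
          refine Finset.sum_congr rfl fun k hk => ?_
          have hkm : (2 : ℝ) ^ k ≤ 2 ^ m :=
            pow_le_pow_right₀ one_le_two (Nat.lt_succ_iff.1 (Finset.mem_range.1 hk))
          simp only [indicator, mem_ofPred_eq, le_min_iff, hkm, and_true,
            apply_ite ENNReal.ofReal, ENNReal.ofReal_zero]
      _ ≤ _ := by
          rw [← ENNReal.ofReal_ofNat 2, ← ENNReal.ofReal_mul two_pos.le, norm_min_norm_two_pow]
          exact ENNReal.ofReal_le_ofReal (sum_range_ite_two_pow_rpow_le hmin hr _)

variable [MeasurableSpace E] [BorelSpace E] {μ : Measure E}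

lemma measurable_levelDensity (hp : Measurable p) (hr : Measurable r) (hu : ContDiff ℝ 1 u)
    (t : ℝ) : Measurable (levelDensity p r u t) := by
  have hu_norm : Measurable fun x => ‖u x‖ := hu.continuous.norm.measurable
  have hDu : Measurable fun x => ‖fderiv ℝ u x‖ :=
    (hu.continuous_fderiv one_ne_zero).norm.measurable
  exact ((hDu.pow hp).ennreal_ofReal.indicator
    ((measurableSet_le measurable_const hu_norm).inter
      (measurableSet_le hu_norm measurable_const))).add
    ((measurable_const.pow hr).ennreal_ofReal.indicator (measurableSet_le measurable_const hu_norm))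

lemma sum_lintegral_levelDensity_two_pow_le (hp : Measurable p) (hr : Measurable r)
    (hr_one : ∀ x, 1 ≤ r x) (hu : ContDiff ℝ 1 u) (m : ℕ) :
    ∑ k ∈ Finset.range (m + 1), ∫⁻ x, levelDensity p r u (2 ^ k) x ∂μ ≤
      4 * modular μ p (fderiv ℝ u) + 2 * modular μ r (fun x => min ‖u x‖ (2 ^ m)) := by
  have hmin : Measurable fun x => min ‖u x‖ (2 ^ m) :=
    hu.continuous.norm.measurable.min measurable_const
  rw [← lintegral_finsetSum _ fun k _ => measurable_levelDensity hp hr hu _, modular, modular,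
    ← lintegral_const_mul' _ _ ENNReal.ofNat_ne_top,
    ← lintegral_const_mul' _ _ ENNReal.ofNat_ne_top,
    ← lintegral_add_right _ ((measurable_ofReal_norm_rpow hr hmin).const_mul _)]
  exact lintegral_mono fun x => sum_levelDensity_two_pow_le (hr_one x) m

lemma le_two_mul_of_le_add_inv_two_mul {I D : ℝ≥0∞} (hI : I ≠ ∞) (h : I ≤ D + 2⁻¹ * I) :
    I ≤ 2 * D := by
  have hhalf : 2⁻¹ * I ≤ D := by
    refine (ENNReal.add_le_add_iff_right (ENNReal.mul_ne_top (by finiteness) hI)).1 (le_trans ?_ h)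
    rw [← add_mul, ENNReal.inv_two_add_inv_two, one_mul]
  rwa [ENNReal.inv_mul_le_iff two_ne_zero ENNReal.ofNat_ne_top] at hhalf

lemma modular_min_two_pow_le_of_levelSet_le {K : ℝ≥0} (hp : Measurable p) (he : Measurable e)
    (hu : ContDiff ℝ 1 u) (hs : 0 ≤ s) (hp_one : ∀ x, 1 ≤ p x) (hpe : ∀ x, p x ≤ e x)
    (heQ : ∀ x, e x ≤ Q) (hu_modular : modular μ p u ≤ 1)
    (hDu_modular : modular μ p (fderiv ℝ u) ≤ 1)
    (h : ∀ t, 1 ≤ t → ∫⁻ x, {x | 2 * t ≤ ‖u x‖}.indicator (fun x => ENNReal.ofReal (t ^ e x)) x ∂μ ≤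
      K * ∫⁻ x, levelDensity p (fun x => p x + s * e x) u t x ∂μ) (m : ℕ) :
    modular μ e (fun x => min ‖u x‖ (2 ^ m)) ≤ ENNReal.ofReal (2 ^ Q) + ENNReal.ofReal (4 ^ Q) *
      (K * (4 + 2 * modular μ (fun x => p x + s * e x) (fun x => min ‖u x‖ (2 ^ m)))) := by
  have hp_nonneg (x : E) : 0 ≤ p x := zero_le_one.trans (hp_one x)
  refine (modular_min_two_pow_le hp he hu.continuous.measurable hp_nonneg hpe heQ m).trans ?_
  gcongr
  · exact mul_le_of_le_one_right' hu_modular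
  refine (Finset.sum_le_sum fun k _ => h (2 ^ k) (one_le_pow₀ one_le_two)).trans ?_
  rw [← Finset.mul_sum]
  gcongr
  refine (sum_lintegral_levelDensity_two_pow_le hp (hp.add (he.const_mul s)) (fun x => ?_) hu
    m).trans ?_
  · exact le_add_of_le_of_nonneg (hp_one x) (mul_nonneg hs ((hp_nonneg x).trans (hpe x)))
  · gcongr
    exacts [mul_le_of_le_one_right' hDu_modular, le_rfl]

/-- The dyadic sum over levels bounds the modular of a truncation by a small multiple of itself,
which can be absorbed since that modular is finite. -/
lemma exists_modular_le_of_levelSet_le (μ : Measure E) (K : ℝ≥0) (hs : 0 < s) (Q : ℝ) :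
    ∃ K' : ℝ≥0, ∀ {p e u : E → ℝ}, Measurable p → Measurable e → ContDiff ℝ 1 u →
      (∀ x, 1 ≤ p x) → (∀ x, p x ≤ e x) → (∀ x, e x ≤ Q) → (∀ x, p x + s * e x + s ≤ e x) →
      modular μ p u ≤ 1 → modular μ p (fderiv ℝ u) ≤ 1 →
      (∀ t, 1 ≤ t → ∫⁻ x, {x | 2 * t ≤ ‖u x‖}.indicator (fun x => ENNReal.ofReal (t ^ e x)) x ∂μ ≤
        K * ∫⁻ x, levelDensity p (fun x => p x + s * e x) u t x ∂μ) →
      modular μ e u ≤ K' := by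
  obtain ⟨δ, hδ, hδK⟩ := ENNReal.exists_nnreal_pos_mul_lt (a := ENNReal.ofReal (4 ^ Q) * (K * 2))
    (b := 2⁻¹) (by finiteness) (ENNReal.inv_ne_zero.2 ENNReal.ofNat_ne_top)
  obtain ⟨C, hC⟩ := exists_modular_le_mul_modular_add μ hδ hs Q
  set D : ℝ≥0∞ := ENNReal.ofReal (2 ^ Q) + ENNReal.ofReal (4 ^ Q) * (K * (4 + 2 * C)) with hD
  refine ⟨(2 * D).toNNReal, fun {p e u} hp he hu hp_one hpe heQ hgap hu_modular hDu_modular h => ?_⟩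
  rw [ENNReal.coe_toNNReal (by finiteness)]
  have hp_nonneg (x : E) : 0 ≤ p x := zero_le_one.trans (hp_one x)
  refine modular_le_of_forall_min_two_pow he hu.continuous.measurable fun m => ?_
  refine le_two_mul_of_le_add_inv_two_mul (modular_min_two_pow_lt_top hp_nonneg hpe heQ
    (hu_modular.trans_lt ENNReal.one_lt_top).ne m).ne ?_
  refine (modular_min_two_pow_le_of_levelSet_le hp he hu hs.le hp_one hpe heQ hu_modular
    hDu_modular h m).trans ?_
  set v : E → ℝ := fun x => min ‖u x‖ (2 ^ m)
  have hv : modular μ p v ≤ 1 := (modular_mono_norm hp_nonneg fun x =>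
    (norm_min_norm_two_pow (u x) m).trans_le (min_le_left _ _)).trans hu_modular
  have habsorb : modular μ (fun x => p x + s * e x) v ≤ δ * modular μ e v + C :=
    (hC hp (hu.continuous.norm.measurable.min measurable_const) hp_nonneg
      (fun x => (hp_nonneg x).trans (hpe x)) heQ hgap).trans
        (by gcongr; exact mul_le_of_le_one_right' hv)
  calc _ ≤ ENNReal.ofReal (2 ^ Q) + ENNReal.ofReal (4 ^ Q) *
        (K * (4 + 2 * (δ * modular μ e v + C))) := by gcongr
    _ = D + δ * (ENNReal.ofReal (4 ^ Q) * (K * 2)) * modular μ e v := by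
        rw [hD]
        ring
    _ ≤ D + 2⁻¹ * modular μ e v := by gcongr

theorem exists_modular_sobolevConj_le [FiniteDimensional ℝ E] (μ : Measure E)
    [μ.IsAddHaarMeasure] {C : ℝ≥0} {P : ℝ} (hp : LogHolderWith C p) (hP : P < finrank ℝ E)
    (hp_one : ∀ x, 1 ≤ p x) (hpP : ∀ x, p x ≤ P) :
    ∃ K : ℝ≥0, ∀ u : E → ℝ, ContDiff ℝ 1 u → modular μ p u ≤ 1 → modular μ p (fderiv ℝ u) ≤ 1 →
      modular μ (fun x => sobolevConj (finrank ℝ E) (p x)) u ≤ K := by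
  set n : ℝ := (finrank ℝ E : ℝ)
  have hpn (x : E) : p x < n := (hpP x).trans_lt hP
  have hn : 0 < n := by linarith [hp_one 0, hpn 0]
  have hs : 0 < 1 / (2 * n) := by positivity
  have hp_meas : Measurable p := hp.continuous.measurable
  have he_meas : Measurable fun x => sobolevConj n (p x) :=
    (hp_meas.const_mul n).div (measurable_const.sub hp_meas)
  obtain ⟨K, hK⟩ := exists_setLIntegral_closedBall_le μ hp hP hp_one hpP hs
  obtain ⟨K', hK'⟩ := exists_modular_le_of_levelSet_le μ (K * 2 ^ finrank ℝ E) hs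
    (sobolevConj n P)
  refine ⟨K', fun u hu hu_modular hDu_modular => ?_⟩
  refine hK' hp_meas he_meas hu hp_one
    (fun x => le_sobolevConj (zero_le_one.trans (hp_one x)) (hpn x))
    (fun x => sobolevConj_le_sobolevConj (hpP x) hP)
    (fun x => add_mul_sobolevConj_add_le (hp_one x) (hpn x)) hu_modular hDu_modular fun t ht => ?_
  have hlevel : Measurable ({x | 2 * t ≤ ‖u x‖}.indicator
      fun x => ENNReal.ofReal (t ^ sobolevConj n (p x))) :=
    (measurable_const.pow he_meas).ennreal_ofReal.indicator
      (measurableSet_le measurable_const hu.continuous.norm.measurable)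
  refine (lintegral_le_of_forall_setLIntegral_closedBall_le hlevel
    (measurable_levelDensity hp_meas (hp_meas.add (he_meas.const_mul _)) hu t) (by positivity)
    two_pos.le (hK u hu hu_modular hDu_modular t ht)).trans_eq ?_
  rw [ENNReal.coe_mul, ENNReal.ofReal_pow two_pos.le]
  norm_cast

end GlobalEstimate

section ModularScaling

variable {X F : Type*} [MeasurableSpace X] [NormedAddCommGroup F] [NormedSpace ℝ F]
  {μ : Measure X} {p : X → ℝ} {f : X → F} {c P : ℝ}

lemma rpow_le_max_one_rpow (hc : 0 ≤ c) {q : ℝ} (hq : 0 ≤ q) (hqP : q ≤ P) :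
    c ^ q ≤ max 1 c ^ P :=
  (Real.rpow_le_rpow hc (le_max_right 1 c) hq).trans
    (Real.rpow_le_rpow_of_exponent_le (le_max_left 1 c) hqP)

lemma modular_smul_le_of_forall_rpow_le (hc : 0 ≤ c) {a : ℝ} (ha : 0 ≤ a)
    (hca : ∀ x, c ^ p x ≤ a) : modular μ p (c • f) ≤ ENNReal.ofReal a * modular μ p f := by
  rw [modular, modular, ← lintegral_const_mul' _ _ ENNReal.ofReal_ne_top]
  refine lintegral_mono fun x => ?_
  beta_reduce
  rw [Pi.smul_apply, norm_smul, Real.norm_of_nonneg hc, Real.mul_rpow hc (norm_nonneg _),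
    ← ENNReal.ofReal_mul ha]
  exact ENNReal.ofReal_le_ofReal (by gcongr; exact hca x)

lemma modular_smul_le (hc : 0 ≤ c) (hc_one : c ≤ 1) (hp : ∀ x, 1 ≤ p x) :
    modular μ p (c • f) ≤ ENNReal.ofReal c * modular μ p f :=
  modular_smul_le_of_forall_rpow_le hc hc fun x =>
    Real.rpow_le_self_of_le_one hc hc_one (hp x)

lemma modular_smul_le_one (hc : 0 ≤ c) (hc_one : c ≤ 1) (hp : ∀ x, 1 ≤ p x) {g : X → ℝ}
    (hfg : ∀ᵐ x ∂μ, c * ‖f x‖ ^ p x ≤ g x) (hg : ∫⁻ x, ENNReal.ofReal (g x) ∂μ ≤ 1) :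
    modular μ p (c • f) ≤ 1 := by
  refine (modular_smul_le hc hc_one hp).trans (le_trans ?_ hg)
  rw [modular, ← lintegral_const_mul' _ _ ENNReal.ofReal_ne_top]
  refine lintegral_mono_ae (hfg.mono fun x hx => ?_)
  rw [← ENNReal.ofReal_mul hc]
  exact ENNReal.ofReal_le_ofReal hx

lemma integrable_norm_rpow_iff_modular_ne_top {u : X → ℝ} (hp : Measurable p) (hu : Measurable u) :
    Integrable (fun x => ‖u x‖ ^ p x) μ ↔ modular μ p u ≠ ∞ := by
  rw [Integrable, and_iff_right (hu.norm.pow hp).aestronglyMeasurable,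
    hasFiniteIntegral_iff_ofReal (.of_forall fun x => by positivity), modular, lt_top_iff_ne_top]

lemma modular_smul_ne_top {u : X → ℝ} (hc : 0 ≤ c) (hp : ∀ x, 0 ≤ p x) (hpP : ∀ x, p x ≤ P)
    (hu : modular μ p u ≠ ∞) : modular μ p (c • u) ≠ ∞ :=
  ne_top_of_le_ne_top (ENNReal.mul_ne_top ENNReal.ofReal_ne_top hu)
    (modular_smul_le_of_forall_rpow_le hc (by positivity) fun x =>
      rpow_le_max_one_rpow hc (hp x) (hpP x))

lemma luxNorm_le_of_modular_le_one {N : ℕ} {p u : EuclideanSpace ℝ (Fin N) → ℝ}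
    (hp : Measurable p) (hu : Measurable u) {τ : ℝ} (hτ : 0 < τ)
    (h : modular volume p (τ⁻¹ • u) ≤ 1) : luxNorm p u ≤ τ := by
  refine csInf_le ⟨0, fun σ hσ => hσ.1.le⟩ ⟨hτ, ?_⟩
  have hmeas : Measurable fun x => |u x / τ| ^ p x := (hu.div_const τ).abs.pow hp
  rw [integral_eq_lintegral_of_nonneg_ae (.of_forall fun x => by positivity)
    hmeas.aestronglyMeasurable]
  refine ENNReal.toReal_le_of_le_ofReal zero_le_one ?_
  simpa only [modular, Pi.smul_apply, smul_eq_mul, Real.norm_eq_abs, inv_mul_eq_div,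
    ENNReal.ofReal_one] using h

end ModularScaling

/-- The integrand `‖Du‖ ^ p + b * |u| ^ p` of the weighted Sobolev modular, with the gradient
replaced by the derivative, which has the same norm. -/
noncomputable def sobolevDensity (p b u : E → ℝ) (x : E) : ℝ :=
  ‖fderiv ℝ u x‖ ^ p x + b x * |u x| ^ p x

section SobolevDensity

variable {p b u : E → ℝ} {c b₀ P : ℝ}

lemma sobolevDensity_smul (hu : Differentiable ℝ u) (hc : 0 ≤ c) (x : E) :
    sobolevDensity p b (c • u) x = c ^ p x * sobolevDensity p b u x := by
  rw [sobolevDensity, sobolevDensity, fderiv_const_smul (hu x), norm_smul, Pi.smul_apply,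
    smul_eq_mul, abs_mul, Real.norm_of_nonneg hc, abs_of_nonneg hc,
    Real.mul_rpow hc (norm_nonneg _), Real.mul_rpow hc (abs_nonneg _)]
  ring

lemma norm_gradient {H : Type*} [NormedAddCommGroup H] [InnerProductSpace ℝ H] [CompleteSpace H]
    (u : H → ℝ) (x : H) : ‖gradient u x‖ = ‖fderiv ℝ u x‖ :=
  LinearIsometryEquiv.norm_map _ _

lemma weightedSobolevNorm_eq_sInf {N : ℕ} {p b u : EuclideanSpace ℝ (Fin N) → ℝ}
    (hu : Differentiable ℝ u) :
    weightedSobolevNorm p b u = sInf {τ : ℝ | 0 < τ ∧ ∫ x, sobolevDensity p b (τ⁻¹ • u) x ≤ 1} := by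
  rw [weightedSobolevNorm]
  refine congrArg sInf (Set.ext fun τ => and_congr_right fun hτ => ?_)
  have hdensity (x : EuclideanSpace ℝ (Fin N)) : sobolevDensity p b (τ⁻¹ • u) x =
      (‖gradient u x‖ / τ) ^ p x + b x * (|u x| / τ) ^ p x := by
    have hτ_inv : 0 ≤ τ⁻¹ := inv_nonneg.2 (le_of_lt hτ)
    rw [sobolevDensity, fderiv_const_smul (hu x), norm_smul, Pi.smul_apply, smul_eq_mul, abs_mul,
      Real.norm_of_nonneg hτ_inv, abs_of_nonneg hτ_inv, norm_gradient, inv_mul_eq_div,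
      inv_mul_eq_div]
  simp only [hdensity]

variable [MeasurableSpace E] {μ : Measure E}

lemma integrable_sobolevDensity_smul (hp : Measurable p) (hp_nonneg : ∀ x, 0 ≤ p x)
    (hpP : ∀ x, p x ≤ P) (hu : Differentiable ℝ u) (hc : 0 ≤ c)
    (h : Integrable (sobolevDensity p b u) μ) : Integrable (sobolevDensity p b (c • u)) μ := by
  simp only [funext (sobolevDensity_smul hu hc)]
  refine h.bdd_mul (c := max 1 c ^ P) (measurable_const.pow hp).aestronglyMeasurable
    (.of_forall fun x => ?_)
  rw [Real.norm_of_nonneg (by positivity)]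
  exact rpow_le_max_one_rpow hc (hp_nonneg x) (hpP x)

lemma exists_integral_sobolevDensity_smul_le_one (hp : Measurable p) (hp_one : ∀ x, 1 ≤ p x)
    (hpP : ∀ x, p x ≤ P) (hb : ∀ᵐ x ∂μ, 0 ≤ b x) (hu : Differentiable ℝ u)
    (h : Integrable (sobolevDensity p b u) μ) :
    ∃ τ : ℝ, 0 < τ ∧ ∫ x, sobolevDensity p b (τ⁻¹ • u) x ∂μ ≤ 1 := by
  have hnonneg : 0 ≤ᵐ[μ] sobolevDensity p b u := hb.mono fun x hx => by
    rw [sobolevDensity]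
    positivity
  set I := ∫ x, sobolevDensity p b u x ∂μ
  have hI : 0 ≤ I := integral_nonneg_of_ae hnonneg
  have hτ : 0 ≤ (1 + I)⁻¹ := by positivity
  refine ⟨1 + I, by positivity, ?_⟩
  have hp_nonneg (x : E) : 0 ≤ p x := zero_le_one.trans (hp_one x)
  calc ∫ x, sobolevDensity p b ((1 + I)⁻¹ • u) x ∂μ
      ≤ ∫ x, (1 + I)⁻¹ * sobolevDensity p b u x ∂μ := by
        refine integral_mono_ae
          (integrable_sobolevDensity_smul hp hp_nonneg hpP hu hτ h) (h.const_mul _)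
          (hnonneg.mono fun x hx => ?_)
        beta_reduce
        rw [sobolevDensity_smul hu hτ]
        gcongr
        exact Real.rpow_le_self_of_le_one hτ (inv_le_one_of_one_le₀ (by linarith)) (hp_one x)
    _ = (1 + I)⁻¹ * I := integral_const_mul _ _
    _ ≤ 1 := by
        rw [inv_mul_le_iff₀ (by positivity)]
        linarith

lemma modular_smul_le_one_of_integral_sobolevDensity_le_one (hp_one : ∀ x, 1 ≤ p x)
    (hc : 0 ≤ c) (hc_one : c ≤ 1) (hb : ∀ᵐ x ∂μ, c ≤ b x) (hu : Differentiable ℝ u)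
    (hint : Integrable (sobolevDensity p b u) μ) (h : ∫ x, sobolevDensity p b u x ∂μ ≤ 1) :
    modular μ p (c • u) ≤ 1 ∧ modular μ p (fderiv ℝ (c • u)) ≤ 1 := by
  have hle : ∫⁻ x, ENNReal.ofReal (sobolevDensity p b u x) ∂μ ≤ 1 := by
    rw [← ofReal_integral_eq_lintegral_ofReal hint (hb.mono fun x hx => ?_)]
    · exact ENNReal.ofReal_le_one.2 h
    · have hbx : 0 ≤ b x := hc.trans hx
      rw [Pi.zero_apply, sobolevDensity]
      positivity
  have hDu : fderiv ℝ (c • u) = c • fderiv ℝ u := funext fun x => fderiv_const_smul (hu x) c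
  rw [hDu]
  refine ⟨modular_smul_le_one hc hc_one hp_one (hb.mono fun x hx => ?_) hle,
    modular_smul_le_one (f := fderiv ℝ u) hc hc_one hp_one (hb.mono fun x hx => ?_) hle⟩
  · rw [sobolevDensity, Real.norm_eq_abs]
    exact le_add_of_nonneg_of_le (by positivity) (by gcongr)
  · have hbx : 0 ≤ b x := hc.trans hx
    rw [sobolevDensity]
    exact le_add_of_le_of_nonneg (mul_le_of_le_one_left (by positivity) hc_one) (by positivity)

theorem exists_modular_sobolevConj_smul_le_one [BorelSpace E] [FiniteDimensional ℝ E]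
    (μ : Measure E) [μ.IsAddHaarMeasure] {C₁ : ℝ≥0} (hp : LogHolderWith C₁ p) (hP : P < finrank ℝ E)
    (hp_one : ∀ x, 1 ≤ p x) (hpP : ∀ x, p x ≤ P) (hb₀ : 0 < b₀) (hb : ∀ᵐ x ∂μ, b₀ ≤ b x) :
    ∃ C : ℝ, 0 < C ∧ ∀ u : E → ℝ, ContDiff ℝ 1 u → Integrable (sobolevDensity p b u) μ →
      ∫ x, sobolevDensity p b u x ∂μ ≤ 1 →
      modular μ (fun x => sobolevConj (finrank ℝ E) (p x)) (C⁻¹ • u) ≤ 1 := by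
  obtain ⟨K, hK⟩ := exists_modular_sobolevConj_le μ hp hP hp_one hpP
  set c : ℝ := min 1 b₀
  have hc : 0 < c := lt_min one_pos hb₀
  set M : ℝ≥0 := max 1 K
  have : 0 < M := one_pos.trans_le (le_max_left 1 K)
  refine ⟨M / c, by positivity, fun u hu hint hle => ?_⟩
  obtain ⟨hu_modular, hDu_modular⟩ := modular_smul_le_one_of_integral_sobolevDensity_le_one
    hp_one hc.le (min_le_left 1 b₀) (hb.mono fun x hx => (min_le_right 1 b₀).trans hx)
    (hu.differentiable one_ne_zero) hint hle
  rw [inv_div, div_eq_inv_mul, mul_smul]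
  calc _ ≤ ENNReal.ofReal (M : ℝ)⁻¹ *
        modular μ (fun x => sobolevConj (finrank ℝ E) (p x)) (c • u) :=
        modular_smul_le (by positivity) (inv_le_one_of_one_le₀ (le_max_left 1 K)) fun x =>
          (hp_one x).trans (le_sobolevConj (zero_le_one.trans (hp_one x)) ((hpP x).trans_lt hP))
    _ ≤ ENNReal.ofReal (M : ℝ)⁻¹ * M := by
        gcongr
        exact (hK _ (hu.const_smul c) hu_modular hDu_modular).trans
          (ENNReal.coe_le_coe.2 (le_max_right 1 K))
    _ = 1 := by
        rw [← ENNReal.ofReal_coe_nnreal, ← ENNReal.ofReal_mul (by positivity),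
          inv_mul_cancel₀ (by positivity), ENNReal.ofReal_one]

end SobolevDensity

theorem weighted_variable_exponent_sobolev_inequality_general {N : ℕ}
    {p : EuclideanSpace ℝ (Fin N) → ℝ} {C₁ : ℝ≥0} (hp : LogHolderWith C₁ p) {P : ℝ} (hP : P < N)
    (hp_one : ∀ x, 1 ≤ p x) (hpP : ∀ x, p x ≤ P) {b : EuclideanSpace ℝ (Fin N) → ℝ} {b₀ : ℝ}
    (hb₀ : 0 < b₀) (hb : ∀ᵐ x, b₀ ≤ b x) :
    ∃ C : ℝ, 0 < C ∧ ∀ u : EuclideanSpace ℝ (Fin N) → ℝ, ContDiff ℝ 1 u →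
      Integrable (fun x => ‖gradient u x‖ ^ p x + b x * |u x| ^ p x) →
      Integrable (fun x => |u x| ^ (N * p x / (N - p x))) ∧
        luxNorm (fun x => N * p x / (N - p x)) u ≤ C * weightedSobolevNorm p b u := by
  have hfinrank : (finrank ℝ (EuclideanSpace ℝ (Fin N)) : ℝ) = N := by
    rw [finrank_euclideanSpace_fin]
  obtain ⟨C, hC, hmod⟩ := exists_modular_sobolevConj_smul_le_one volume hp
    (hP.trans_eq hfinrank.symm) hp_one hpP hb₀ hb
  rw [hfinrank] at hmod
  have hp_meas : Measurable p := hp.continuous.measurable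
  have hconj_meas : Measurable fun x => sobolevConj N (p x) :=
    (hp_meas.const_mul _).div (measurable_const.sub hp_meas)
  have hp_nonneg (x : EuclideanSpace ℝ (Fin N)) : 0 ≤ p x := zero_le_one.trans (hp_one x)
  refine ⟨C, hC, fun u hu hint => ?_⟩
  simp only [norm_gradient] at hint
  have hu_diff : Differentiable ℝ u := hu.differentiable one_ne_zero
  have hscaled (τ : ℝ) (hτ : 0 < τ) (hτ_le : ∫ x, sobolevDensity p b (τ⁻¹ • u) x ≤ 1) :
      modular volume (fun x => sobolevConj N (p x)) ((C * τ)⁻¹ • u) ≤ 1 := by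
    rw [mul_inv, mul_smul]
    exact hmod _ (hu.const_smul τ⁻¹) (integrable_sobolevDensity_smul hp_meas hp_nonneg hpP hu_diff
      (by positivity) hint) hτ_le
  obtain ⟨τ₀, hτ₀, hτ₀_le⟩ := exists_integral_sobolevDensity_smul_le_one hp_meas hp_one hpP
    (hb.mono fun x hx => hb₀.le.trans hx) hu_diff hint
  constructor
  · refine (integrable_norm_rpow_iff_modular_ne_top hconj_meas hu.continuous.measurable).2 ?_
    rw [← smul_inv_smul₀ (by positivity : C * τ₀ ≠ 0) u]
    exact modular_smul_ne_top (by positivity) (fun x => (hp_nonneg x).trans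
      (le_sobolevConj (hp_nonneg x) ((hpP x).trans_lt hP)))
      (fun x => sobolevConj_le_sobolevConj (hpP x) hP)
      ((hscaled τ₀ hτ₀ hτ₀_le).trans_lt ENNReal.one_lt_top).ne
  · rw [weightedSobolevNorm_eq_sInf hu_diff, ← div_le_iff₀' hC]
    refine le_csInf ⟨τ₀, hτ₀, hτ₀_le⟩ fun τ hτ => (div_le_iff₀' hC).2 ?_
    exact luxNorm_le_of_modular_le_one hconj_meas hu.continuous.measurable (mul_pos hC hτ.1)
      (hscaled τ hτ.1 hτ.2)

/-- Sobolev inequality in the weighted variable exponent setting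
(Proposition 2.6, stated for C¹ functions). -/
theorem weighted_variable_exponent_sobolev_inequality
    {N : ℕ} (hN : 2 ≤ N)
    (p : EuclideanSpace ℝ (Fin N) → ℝ) (hp_cont : Continuous p)
    (pm pp : ℝ) (hpm : 1 < pm) (hpp : pp < N)
    (hp_bounds : ∀ x, pm ≤ p x ∧ p x ≤ pp)
    (C₁ : ℝ) (hC₁ : 0 < C₁)
    (hp_logHolder : ∀ x y : EuclideanSpace ℝ (Fin N),
      0 < dist x y → dist x y < 1 / 2 →
        |p x - p y| * Real.log (1 / dist x y) ≤ C₁)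
    (pinf C₂ : ℝ) (hC₂ : 0 < C₂)
    (hp_decay : ∀ x : EuclideanSpace ℝ (Fin N),
      |p x - pinf| ≤ C₂ / Real.log (Real.exp 1 + ‖x‖))
    (b : EuclideanSpace ℝ (Fin N) → ℝ) (hb_meas : Measurable b)
    (B : ℝ) (hb_bdd : ∀ᵐ x ∂volume, |b x| ≤ B)
    (b₀ : ℝ) (hb₀ : 0 < b₀) (hb_lb : ∀ᵐ x ∂volume, b₀ ≤ b x) :
    ∃ C : ℝ, 0 < C ∧
      ∀ u : EuclideanSpace ℝ (Fin N) → ℝ, ContDiff ℝ 1 u →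
        Integrable (fun x => ‖gradient u x‖ ^ (p x) + b x * |u x| ^ (p x)) volume →
        luxNorm (fun x => N * p x / (N - p x)) u ≤ C * weightedSobolevNorm p b u := by
  obtain ⟨C, hC, h⟩ := weighted_variable_exponent_sobolev_inequality_general (C₁ := C₁.toNNReal)
    (fun x y hxy hxy_lt => (hp_logHolder x y hxy hxy_lt).trans (Real.le_coe_toNNReal C₁)) hpp
    (fun x => hpm.le.trans (hp_bounds x).1) (fun x => (hp_bounds x).2) hb₀ hb_lb
  exact ⟨C, hC, fun u hu hint => (h u hu hint).2⟩
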